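/- Let q be an even prime power with q ≥ 2048. Then every k-cap in PG(4, q) satisfies k < q³ − 2q² + 3q√q + 8q − 9√q − 6 (so m₂(4,q) < q³ − 2q² + 3q√q + 8q − 9√q − 6). -/

import Mathlib

open Module

/-- Points of the projective space `PG(n, q)` over the field `F` (with `q = |F|`). -/
abbrev PGPoint (F : Type*) [Field F] (n : ℕ) := Projectivization F (Fin (n + 1) → F)

/-- The set of projective points lying in the projective subspace determined by
a linear subspace `W`. -/
def ptsIn {F : Type*} [Field F] {n : ℕ} (W : Submodule F (Fin (n + 1) → F)) :
    Set (PGPoint F n) := {P | P.submodule ≤ W}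

/-- Three points of `PG(n, q)` are collinear if they lie on a common line. -/
def Coll3 {F : Type*} [Field F] {n : ℕ} (P₁ P₂ P₃ : PGPoint F n) : Prop :=
  Module.finrank F ↥(P₁.submodule ⊔ P₂.submodule ⊔ P₃.submodule) ≤ 2

/-- A cap (a plane arc when `n = 2`): a set of points no three of which are collinear. -/
def IsCap {F : Type*} [Field F] {n : ℕ} (K : Set (PGPoint F n)) : Prop :=
  ∀ P₁ ∈ K, ∀ P₂ ∈ K, ∀ P₃ ∈ K, P₁ ≠ P₂ → P₁ ≠ P₃ → P₂ ≠ P₃ → ¬ Coll3 P₁ P₂ P₃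

/-- A complete cap: a cap that is not contained in a cap with one more point. -/
def IsCompleteCap {F : Type*} [Field F] {n : ℕ} (K : Set (PGPoint F n)) : Prop :=
  IsCap K ∧ ∀ P ∉ K, ¬ IsCap (insert P K)

/-- A tangent line of `K`: a line (2-dimensional linear subspace) meeting `K`
in exactly one point. -/
def IsTangent {F : Type*} [Field F] {n : ℕ} (K : Set (PGPoint F n))
    (W : Submodule F (Fin (n + 1) → F)) : Prop :=
  Module.finrank F W = 2 ∧ (ptsIn W ∩ K).ncard = 1


section planepart
variable {F : Type*} [Field F]

/-- the 3 by 3 determinant -/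
def dd (a b c : Fin 3 → F) : F :=
  a 0 * (b 1 * c 2 - b 2 * c 1) - a 1 * (b 0 * c 2 - b 2 * c 0) + a 2 * (b 0 * c 1 - b 1 * c 0)

theorem dd_pl (a x y b c : Fin 3 → F) :
    dd a x b * dd a y c - dd a y b * dd a x c = dd a x y * dd a b c := by
  unfold dd; ring

theorem dd_add_mid (a x y b : Fin 3 → F) (l : F) :
    dd a (x + l • y) b = dd a x b + l * dd a y b := by
  unfold dd; simp; ring

theorem dd_self (a b : Fin 3 → F) : dd a b b = 0 := by unfold dd; ring
theorem dd_self' (a b : Fin 3 → F) : dd a a b = 0 := by unfold dd; ring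
theorem dd_self_two (a b : Fin 3 → F) : dd a b a = 0 := by unfold dd; ring

theorem dd_swap [CharP F 2] (a b c : Fin 3 → F) : dd a b c = dd a c b := by
  have : dd a b c = - dd a c b := by unfold dd; ring
  rw [this, CharTwo.neg_eq]

theorem dd_swap' [CharP F 2] (a b c : Fin 3 → F) : dd a b c = dd b a c := by
  have : dd a b c = - dd b a c := by unfold dd; ring
  rw [this, CharTwo.neg_eq]

theorem lagr {ι : Type*} [DecidableEq ι] (a Q : Fin 3 → F) (E : Finset ι) (v : ι → Fin 3 → F)
    (Λ : Finset F) (c : F → Fin 3 → F) (hc : E.card = Λ.card + 1)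
    (hD : ∀ j ∈ E, dd a Q (v j) ≠ 0)
    (hE : ∀ j ∈ E, ∀ u ∈ E, j ≠ u → dd a (v j) (v u) ≠ 0) :
    (∏ l ∈ Λ, dd a (c l) Q) = (∏ j ∈ E, dd a Q (v j)) *
      ∑ j ∈ E, (∏ l ∈ Λ, dd a (c l) (v j)) / (dd a Q (v j) * ∏ u ∈ E.erase j, dd a (v j) (v u)) := by
  classical
  obtain ⟨j0, hj0⟩ : E.Nonempty := Finset.card_pos.mp (by omega)
  obtain ⟨w, hw⟩ : ∃ w, dd a Q w = 1 := by
    refine ⟨(dd a Q (v j0))⁻¹ • v j0, ?_⟩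
    have : dd a Q ((dd a Q (v j0))⁻¹ • v j0) = (dd a Q (v j0))⁻¹ * dd a Q (v j0) := by
      generalize (dd a Q (v j0))⁻¹ = z
      unfold dd; simp; ring
    rw [this, inv_mul_cancel₀ (hD _ hj0)]
  set y : ι → F := fun j => dd a (v j) w / dd a Q (v j) with hy
  have h1 : ∀ x, ∀ j ∈ E, dd a x (v j) = dd a Q (v j) * (dd a x w + y j * dd a x Q) := by
    intro x j hj
    have h := dd_pl a x (v j) Q w
    rw [hw] at h
    have h3 : dd a (v j) Q = - dd a Q (v j) := by unfold dd; ring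
    rw [h3] at h
    have := hD j hj
    simp only [hy]
    field_simp
    linear_combination -h
  have h2 : ∀ j ∈ E, ∀ u ∈ E, dd a (v j) (v u) = dd a Q (v j) * dd a Q (v u) * (y j - y u) := by
    intro j hj u hu
    rw [h1 _ u hu]
    have h3 : dd a (v j) Q = - dd a Q (v j) := by unfold dd; ring
    rw [h3]
    have := hD j hj
    simp only [hy]
    field_simp
    ring
  have hinj : Set.InjOn y E := by
    intro j hj u hu hju
    by_contra hne
    apply hE j hj u hu hne
    rw [h2 j hj u hu, hju]; ring
  set p : Polynomial F := ∏ l ∈ Λ, (Polynomial.C (dd a (c l) Q) * Polynomial.X + Polynomial.C (dd a (c l) w)) with hp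
  have hdeg : p.natDegree ≤ Λ.card := by
    rw [hp]
    refine (Polynomial.natDegree_prod_le _ _).trans ?_
    refine (Finset.sum_le_card_nsmul _ _ 1 ?_).trans (by simp)
    intro l _
    exact Polynomial.natDegree_linear_le
  have hcoeff : p.coeff Λ.card = ∏ l ∈ Λ, dd a (c l) Q := by
    have := Polynomial.coeff_prod_of_natDegree_le (s := Λ) (f := fun l => (Polynomial.C (dd a (c l) Q) * Polynomial.X + Polynomial.C (dd a (c l) w))) 1 (fun l _ => Polynomial.natDegree_linear_le)
    rw [mul_one] at this
    rw [hp, this]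
    apply Finset.prod_congr rfl
    intro l _
    simp
  have hlt : p.degree < E.card := by
    apply lt_of_le_of_lt Polynomial.degree_le_natDegree
    rw [hc]
    exact_mod_cast Nat.lt_succ_of_le hdeg
  have key := Lagrange.coeff_eq_sum hinj hlt
  rw [show E.card - 1 = Λ.card by omega, hcoeff] at key
  rw [key, Finset.mul_sum]
  apply Finset.sum_congr rfl
  intro j hj
  have e1 : p.eval (y j) * (dd a Q (v j)) ^ Λ.card = ∏ l ∈ Λ, dd a (c l) (v j) := by
    rw [hp, Polynomial.eval_prod, ← Finset.prod_const, ← Finset.prod_mul_distrib]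
    apply Finset.prod_congr rfl
    intro l _
    rw [h1 (c l) j hj]; simp; ring
  have hce : (E.erase j).card = Λ.card := by rw [Finset.card_erase_of_mem hj]; omega
  have e2 : ∏ u ∈ E.erase j, dd a (v j) (v u) =
      (dd a Q (v j)) ^ Λ.card * (∏ u ∈ E.erase j, dd a Q (v u)) * ∏ u ∈ E.erase j, (y j - y u) := by
    rw [← hce, ← Finset.prod_const, ← Finset.prod_mul_distrib, ← Finset.prod_mul_distrib]
    apply Finset.prod_congr rfl
    intro u hu
    rw [h2 j hj u (Finset.mem_of_mem_erase hu)]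
  rw [← e1, e2, ← Finset.mul_prod_erase E _ hj]
  have n1 := hD j hj
  have n2 : (∏ u ∈ E.erase j, dd a Q (v u)) ≠ 0 :=
    Finset.prod_ne_zero_iff.mpr (fun u hu => hD u (Finset.mem_of_mem_erase hu))
  have n3 : (∏ u ∈ E.erase j, (y j - y u)) ≠ 0 := by
    refine Finset.prod_ne_zero_iff.mpr (fun u hu => ?_)
    rw [sub_ne_zero]
    intro h
    exact (Finset.ne_of_mem_erase hu) (hinj (Finset.mem_of_mem_erase hu) hj h.symm)
  field_simp
end planepart


section planepart2
variable {F : Type*} [Field F] [Fintype F]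

theorem prod_units_char2 [CharP F 2] {κ : Type*} (T : Finset κ) (g : κ → F) (h0 : ∀ x ∈ T, g x ≠ 0)
    (hinj : Set.InjOn g T) (hc : T.card + 1 = Fintype.card F) : ∏ x ∈ T, g x = 1 := by
  classical
  have h1 : T.image g = Finset.univ.erase (0 : F) := by
    apply Finset.eq_of_subset_of_card_le
    · intro y hy
      obtain ⟨x, hx, rfl⟩ := Finset.mem_image.mp hy
      simp [h0 x hx]
    · rw [Finset.card_image_of_injOn hinj, Finset.card_erase_of_mem (Finset.mem_univ _),
        Finset.card_univ]; omega
  have h2 : ∏ y ∈ T.image g, y = ∏ x ∈ T, g x := Finset.prod_image hinj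
  rw [← h2, h1]
  have h3 := FiniteField.prod_univ_units_id_eq_neg_one (K := F)
  have h4 : ∏ x : Fˣ, (x : F) = 1 := by
    have := congrArg (fun u : Fˣ => (u : F)) h3
    simp only [Units.coe_prod, Units.val_neg, Units.val_one, CharTwo.neg_eq] at this
    exact this
  rw [← h4]
  symm
  refine Finset.prod_bij (fun u _ => (u : F)) ?_ ?_ ?_ ?_
  · intro u _; simp
  · intro u _ w _ h; exact Units.ext h
  · intro b hb
    have : b ≠ 0 := by simpa using hb
    exact ⟨Units.mk0 b this, Finset.mem_univ _, rfl⟩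
  · intro u _; rfl

theorem tanfun [CharP F 2] {ι : Type*} [DecidableEq ι] (S : Finset ι) (v : ι → Fin 3 → F)
    (harc : ∀ a ∈ S, ∀ b ∈ S, ∀ c ∈ S, a ≠ b → a ≠ c → b ≠ c → dd (v a) (v b) (v c) ≠ 0)
    (f : ℕ) (hf : S.card + f = Fintype.card F + 2) (hS : 3 ≤ S.card) (a : ι) (ha : a ∈ S) :
    ∃ (Λ : Finset F) (c : F → Fin 3 → F), Λ.card = f ∧
      (∀ l ∈ Λ, ∀ s ∈ S, s ≠ a → dd (v a) (c l) (v s) ≠ 0) ∧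
      (∀ Q, (∀ s ∈ S, s ≠ a → dd (v a) Q (v s) ≠ 0) → ∏ l ∈ Λ, dd (v a) (c l) Q = 0) ∧
      ∃ C : F, C ≠ 0 ∧ ∀ b ∈ S, b ≠ a →
        (∏ l ∈ Λ, dd (v a) (c l) (v b)) * ∏ s ∈ (S.erase a).erase b, dd (v a) (v b) (v s) = C := by
  classical
  obtain ⟨u, hu, w, hw, huw⟩ : ∃ u ∈ S.erase a, ∃ w ∈ S.erase a, u ≠ w := by
    apply Finset.one_lt_card.mp
    rw [Finset.card_erase_of_mem ha]; omega
  rw [Finset.mem_erase] at hu hw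
  set c : F → Fin 3 → F := fun l => v u + l • v w with hcdef
  set Λ : Finset F := Finset.univ.filter (fun l => ∀ s ∈ S, s ≠ a → dd (v a) (c l) (v s) ≠ 0) with hΛ
  have hauw : dd (v a) (v u) (v w) ≠ 0 := harc a ha u hu.2 w hw.2 hu.1.symm hw.1.symm huw
  have hmem : ∀ l ∈ Λ, ∀ s ∈ S, s ≠ a → dd (v a) (c l) (v s) ≠ 0 := by
    intro l hl; simpa [hΛ] using hl
  have hΛc : Λ.card = f := by
    set g : ι → F := fun s => - dd (v a) (v u) (v s) / dd (v a) (v w) (v s) with hg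
    have hws : ∀ s ∈ (S.erase a).erase w, dd (v a) (v w) (v s) ≠ 0 := by
      intro s hs
      simp only [Finset.mem_erase] at hs
      exact harc a ha w hw.2 s hs.2.2 hw.1.symm hs.2.1.symm hs.1.symm
    have hcompl : Λᶜ = ((S.erase a).erase w).image g := by
      ext l
      simp only [Finset.mem_compl, hΛ, Finset.mem_filter, Finset.mem_univ, true_and, Finset.mem_image, hg]
      push Not
      constructor
      · rintro ⟨s, hs, hsa, h⟩
        have hsw : s ≠ w := by
          rintro rfl
          rw [hcdef] at h
          simp only [dd_add_mid, dd_self, mul_zero, add_zero] at h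
          exact hauw h
        refine ⟨s, by simp [hs, hsa, hsw], ?_⟩
        have := hws s (by simp [hs, hsa, hsw])
        rw [hcdef] at h
        simp only [dd_add_mid] at h
        field_simp
        linear_combination -h
      · rintro ⟨s, hs, rfl⟩
        have := hws s hs
        simp only [Finset.mem_erase] at hs
        refine ⟨s, hs.2.2, hs.2.1, ?_⟩
        simp only [hcdef, dd_add_mid]
        field_simp
        ring
    have hinj : Set.InjOn g ((S.erase a).erase w) := by
      intro s hs t ht hst
      by_contra hne
      have h1 := hws s hs
      have h2 := hws t ht
      simp only [Finset.coe_erase, Set.mem_sdiff, Finset.mem_coe, Set.mem_singleton_iff] at hs ht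
      simp only [hg] at hst
      field_simp at hst
      have := dd_pl (v a) (v u) (v w) (v s) (v t)
      have h3 : dd (v a) (v u) (v w) * dd (v a) (v s) (v t) = 0 := by
        rw [← this]; linear_combination -hst
      rcases mul_eq_zero.mp h3 with h | h
      · exact hauw h
      · exact harc a ha s hs.1.1 t ht.1.1 (fun h => hs.1.2 h.symm) (fun h => ht.1.2 h.symm) hne h
    have hcc := Finset.card_add_card_compl Λ
    rw [hcompl, Finset.card_image_of_injOn hinj, Finset.card_erase_of_mem (by simp [hw]),
      Finset.card_erase_of_mem ha] at hcc
    omega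
  refine ⟨Λ, c, hΛc, hmem, ?_, ?_⟩
  · intro Q hQ
    have hβ := hQ w hw.2 hw.1
    have hγ := hQ u hu.2 hu.1
    -- l = [Q,u]/[w,Q]
    have hQw : dd (v a) (v w) Q = - dd (v a) Q (v w) := by unfold dd; ring
    have hQu : dd (v a) (v u) Q = - dd (v a) Q (v u) := by unfold dd; ring
    set l : F := - dd (v a) Q (v u) / dd (v a) Q (v w) with hl
    have key : ∀ x, dd (v a) (c l) x * dd (v a) Q (v w) = dd (v a) (v u) (v w) * dd (v a) Q x := by
      intro x
      simp only [hcdef, dd_add_mid, hl]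
      field_simp
      unfold dd; ring
    apply Finset.prod_eq_zero (i := l)
    · simp only [hΛ, Finset.mem_filter, Finset.mem_univ, true_and]
      intro s hs hsa h0
      have := key (v s)
      rw [h0, zero_mul] at this
      exact mul_ne_zero hauw (hQ s hs hsa) this.symm
    · have := key Q
      rw [dd_self, mul_zero] at this
      exact (mul_eq_zero.mp this).resolve_right hβ
  · have hne0 : ∀ b ∈ S, b ≠ a → (∏ l ∈ Λ, dd (v a) (c l) (v b)) * ∏ s ∈ (S.erase a).erase b, dd (v a) (v b) (v s) ≠ 0 := by
      intro b hb hba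
      refine mul_ne_zero (Finset.prod_ne_zero_iff.mpr (fun l hl => hmem l hl b hb hba))
        (Finset.prod_ne_zero_iff.mpr (fun s hs => ?_))
      simp only [Finset.mem_erase] at hs
      exact harc a ha b hb s hs.2.2 hba.symm hs.2.1.symm hs.1.symm
    refine ⟨_, hne0 u hu.2 hu.1, ?_⟩
    intro b hb hba
    by_cases hbu : b = u
    · rw [hbu]
    have hu2 := hu.2
    have hu1 := hu.1
    clear_value c Λ
    -- product over slopes
    set R := ((S.erase a).erase b).erase u with hR
    have hRm : ∀ s ∈ R, s ∈ S ∧ s ≠ a ∧ s ≠ b ∧ s ≠ u := by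
      intro s hs; simp only [hR, Finset.mem_erase] at hs; tauto
    have hcR : R.card + 3 = S.card := by
      rw [hR, Finset.card_erase_of_mem, Finset.card_erase_of_mem, Finset.card_erase_of_mem ha]
      · omega
      · simp [hb, hba]
      · simp only [Finset.mem_erase]; exact ⟨fun h => hbu h.symm, hu1, hu2⟩
    have hinjc : ∀ l ∈ Λ, ∀ m ∈ Λ, dd (v a) (c l) (c m) = 0 → l = m := by
      intro l _ m _ h
      subst hcdef
      simp only [dd_add_mid] at h
      have : (m - l) * dd (v a) (v u) (v w) = 0 := by
        rw [← h]; simp [dd]; ring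
      rcases mul_eq_zero.mp this with h | h
      · exact (sub_eq_zero.mp h).symm
      · exact absurd h hauw
    set G : F ⊕ ι → (Fin 3 → F) := Sum.elim c v with hG
    have hGb : ∀ x ∈ Λ.disjSum R, ∀ y ∈ S, y = b ∨ y = u → dd (v a) (G x) (v y) ≠ 0 := by
      intro x hx y hy hyy
      rcases x with l | s
      · have hl : l ∈ Λ := by simpa using hx
        exact hmem l hl y hy (by rcases hyy with rfl | rfl <;> assumption)
      · have hs : s ∈ R := by simpa using hx
        obtain ⟨h1, h2, h3, h4⟩ := hRm s hs
        apply harc a ha s h1 y hy h2.symm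
        · rcases hyy with rfl | rfl <;> exact Ne.symm ‹_›
        · rcases hyy with rfl | rfl <;> assumption
    have hGinj : ∀ x ∈ Λ.disjSum R, ∀ y ∈ Λ.disjSum R, dd (v a) (G x) (G y) = 0 → x = y := by
      intro x hx y hy h
      rcases x with l | s <;> rcases y with m | t
      · have hl : l ∈ Λ := by simpa using hx
        have hm : m ∈ Λ := by simpa using hy
        rw [hinjc l hl m hm h]
      · have hl : l ∈ Λ := by simpa using hx
        have ht : t ∈ R := by simpa using hy
        exact absurd h (hmem l hl t (hRm t ht).1 (hRm t ht).2.1)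
      · have hl : m ∈ Λ := by simpa using hy
        have ht : s ∈ R := by simpa using hx
        rw [dd_swap] at h
        exact absurd h (hmem m hl s (hRm s ht).1 (hRm s ht).2.1)
      · have hs : s ∈ R := by simpa using hx
        have ht : t ∈ R := by simpa using hy
        by_contra hne
        exact harc a ha s (hRm s hs).1 t (hRm t ht).1 (hRm s hs).2.1.symm (hRm t ht).2.1.symm
          (fun h => hne (by rw [h])) h
    have habu : dd (v a) (v b) (v u) ≠ 0 := harc a ha b hb u hu2 hba.symm hu1.symm hbu
    have hp := prod_units_char2 (Λ.disjSum R)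
      (fun x => dd (v a) (G x) (v b) / dd (v a) (G x) (v u))
      (fun x hx => div_ne_zero (hGb x hx b hb (Or.inl rfl)) (hGb x hx u hu2 (Or.inr rfl)))
      (by
        intro x hx y hy hxy
        apply hGinj x hx y hy
        have h1 := hGb x hx u hu2 (Or.inr rfl)
        have h2 := hGb y hy u hu2 (Or.inr rfl)
        simp only at hxy
        rw [div_eq_div_iff h1 h2] at hxy
        have := dd_pl (v a) (G x) (G y) (v b) (v u)
        rw [hxy, sub_self] at this
        exact (mul_eq_zero.mp this.symm).resolve_right habu)
      (by rw [Finset.card_disjSum]; omega)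
    rw [Finset.prod_div_distrib, div_eq_one_iff_eq (Finset.prod_ne_zero_iff.mpr (fun x hx => hGb x hx u hu2 (Or.inr rfl))),
      Finset.prod_disjSum, Finset.prod_disjSum] at hp
    simp only [hG, Sum.elim_inl, Sum.elim_inr] at hp
    have e1 : ∏ s ∈ (S.erase a).erase b, dd (v a) (v b) (v s) = dd (v a) (v b) (v u) * ∏ s ∈ R, dd (v a) (v s) (v b) := by
      rw [← Finset.mul_prod_erase ((S.erase a).erase b) _ (show u ∈ _ by
        simp only [Finset.mem_erase]; exact ⟨fun h => hbu h.symm, hu1, hu2⟩)]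
      congr 1
      exact Finset.prod_congr rfl (fun s _ => dd_swap _ _ _)
    have e2 : ∏ s ∈ (S.erase a).erase u, dd (v a) (v u) (v s) = dd (v a) (v b) (v u) * ∏ s ∈ R, dd (v a) (v s) (v u) := by
      rw [← Finset.mul_prod_erase ((S.erase a).erase u) _ (show b ∈ _ by
        simp only [Finset.mem_erase]; exact ⟨hbu, hba, hb⟩), Finset.erase_right_comm, dd_swap]
      congr 1
      exact Finset.prod_congr rfl (fun s _ => dd_swap _ _ _)
    rw [e1, e2]
    linear_combination (dd (v a) (v b) (v u)) * hp
end planepart2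


section planepart3
variable {F : Type*} [Field F] [Fintype F]

theorem sum_offdiag_char2 [CharP F 2] {ι : Type*} [DecidableEq ι] (E : Finset ι) (g : ι → ι → F)
    (hg : ∀ i ∈ E, ∀ j ∈ E, g i j = g j i) : ∑ i ∈ E, ∑ j ∈ E.erase i, g i j = 0 := by
  have h : ∀ i ∈ E, ∑ j ∈ E.erase i, g i j = ∑ j ∈ E, if j = i then 0 else g i j := by
    intro i hi
    rw [← Finset.add_sum_erase E _ hi]
    simp only [if_true, zero_add]
    apply Finset.sum_congr rfl
    intro j hj
    rw [if_neg (Finset.ne_of_mem_erase hj)]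
  rw [Finset.sum_congr rfl h, ← Finset.sum_product']
  refine Finset.sum_involution (fun p _ => (p.2, p.1)) ?_ ?_ ?_ ?_
  · rintro ⟨i, j⟩ hp
    simp only [Finset.mem_product] at hp
    simp only
    by_cases hij : j = i
    · simp [hij]
    · rw [if_neg hij, if_neg (fun h => hij h.symm), hg i hp.1 j hp.2]
      exact CharTwo.add_self_eq_zero _
  · rintro ⟨i, j⟩ hp hne heq
    simp only [Prod.mk.injEq] at heq
    simp [heq.1] at hne
  · rintro ⟨i, j⟩ hp
    simp only [Finset.mem_product] at hp ⊢
    exact ⟨hp.2, hp.1⟩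
  · rintro ⟨i, j⟩ hp
    rfl

theorem plane_lemma [CharP F 2] {ι : Type*} [DecidableEq ι] (S : Finset ι) (v : ι → Fin 3 → F)
    (harc : ∀ a ∈ S, ∀ b ∈ S, ∀ c ∈ S, a ≠ b → a ≠ c → b ≠ c → dd (v a) (v b) (v c) ≠ 0)
    (f : ℕ) (hf : S.card + f = Fintype.card F + 2) (A A' : ι) (hA : A ∈ S) (hA' : A' ∈ S) (hAA : A ≠ A')
    (α β : F) (hβ : β ≠ 0) (Q : Fin 3 → F) (hQ : Q = α • v A + β • v A')
    (U : Finset ι) (hU : U ⊆ S) (hUt : ∀ R ∈ U, ∀ R' ∈ S, R' ≠ R → dd (v R) Q (v R') ≠ 0) :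
    U.card ≤ f := by
  classical
  by_contra hcon
  push Not at hcon
  obtain ⟨E', hE'U, hE'c⟩ := Finset.exists_subset_card_eq (show f + 1 ≤ U.card from hcon)
  have hQA : dd (v A) Q (v A') = 0 := by rw [hQ]; simp [dd]; ring
  have hQA' : dd (v A') Q (v A) = 0 := by rw [hQ]; simp [dd]; ring
  have hAU : A ∉ U := fun h => hUt A h A' hA' hAA.symm hQA
  have hA'U : A' ∉ U := fun h => hUt A' h A hA hAA hQA'
  have hS3 : 3 ≤ S.card := by
    obtain ⟨R, hR⟩ : U.Nonempty := Finset.card_pos.mp (by omega)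
    have : ({A, A', R} : Finset ι) ⊆ S := by
      intro x hx
      simp only [Finset.mem_insert, Finset.mem_singleton] at hx
      rcases hx with rfl | rfl | rfl
      · exact hA
      · exact hA'
      · exact hU hR
    have h3 : ({A, A', R} : Finset ι).card = 3 := by
      rw [Finset.card_eq_three]
      exact ⟨A, A', R, hAA, fun h => hAU (h ▸ hR), fun h => hA'U (h ▸ hR), rfl⟩
    rw [← h3]; exact Finset.card_le_card this
  choose! Λ c hΛ hne htan C hC hCe using tanfun S v harc f hf hS3
  set E := insert A E' with hE
  have hAE' : A ∉ E' := fun h => hAU (hE'U h)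
  have hEc : E.card = f + 2 := by rw [hE, Finset.card_insert_of_notMem hAE', hE'c]
  have hES : E ⊆ S := by
    intro x hx
    rcases Finset.mem_insert.mp hx with rfl | h
    · exact hA
    · exact hU (hE'U h)
  have hsym : ∀ i j, dd (v i) Q (v j) = dd (v j) Q (v i) := by
    intro i j
    rw [dd_swap', dd_swap, dd_swap']
  have hD : ∀ i ∈ E, ∀ j ∈ E, i ≠ j → dd (v i) Q (v j) ≠ 0 := by
    intro i hi j hj hij
    by_cases hiA : i = A
    · have hjU : j ∈ U := by
        rcases Finset.mem_insert.mp hj with rfl | h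
        · exact absurd hiA hij
        · exact hE'U h
      rw [hsym]
      exact hUt j hjU i (hES hi) hij
    · have hiU : i ∈ U := by
        rcases Finset.mem_insert.mp hi with rfl | h
        · exact absurd rfl hiA
        · exact hE'U h
      exact hUt i hiU j (hES hj) hij.symm
  set g : ι → ι → F := fun i j => 1 / ((∏ s ∈ (S.erase i).erase j, dd (v i) (v j) (v s)) *
      (dd (v i) Q (v j) * ∏ u ∈ (E.erase i).erase j, dd (v i) (v j) (v u))) with hg
  have hgs : ∀ i ∈ E, ∀ j ∈ E, g i j = g j i := by
    intro i _ j _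
    simp only [hg]
    rw [Finset.erase_right_comm (s := S), Finset.erase_right_comm (s := E), hsym i j]
    simp only [dd_swap' (v i) (v j)]
  have hsum := sum_offdiag_char2 E g hgs
  have hL : ∀ i ∈ E, ∏ l ∈ Λ i, dd (v i) (c i l) Q =
      (∏ j ∈ E.erase i, dd (v i) Q (v j)) * (C i * ∑ j ∈ E.erase i, g i j) := by
    intro i hi
    have hiS := hES hi
    rw [lagr (v i) Q (E.erase i) v (Λ i) (c i)
      (by rw [Finset.card_erase_of_mem hi, hEc, hΛ i hiS]; omega)
      (fun j hj => hD i hi j (Finset.mem_of_mem_erase hj) (Finset.ne_of_mem_erase hj).symm)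
      (fun j hj u hu hju => harc i hiS j (hES (Finset.mem_of_mem_erase hj)) u (hES (Finset.mem_of_mem_erase hu))
        (Finset.ne_of_mem_erase hj).symm (Finset.ne_of_mem_erase hu).symm hju)]
    congr 1
    rw [Finset.mul_sum]
    apply Finset.sum_congr rfl
    intro j hj
    have hjS := hES (Finset.mem_of_mem_erase hj)
    have hji := Finset.ne_of_mem_erase hj
    have h1 := hCe i hiS j hjS hji
    have hP : (∏ s ∈ (S.erase i).erase j, dd (v i) (v j) (v s)) ≠ 0 := by
      intro h
      rw [h, mul_zero] at h1
      exact hC i hiS h1.symm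
    simp only [hg]
    rw [← h1]
    rw [mul_one_div, mul_comm (∏ l ∈ Λ i, dd (v i) (c i l) (v j)), mul_div_mul_left _ _ hP]
  have hz : ∀ i ∈ E', ∑ j ∈ E.erase i, g i j = 0 := by
    intro i hi
    have hiE : i ∈ E := Finset.mem_insert_of_mem hi
    have h1 := hL i hiE
    rw [htan i (hES hiE) Q (fun s hs hsi => hUt i (hE'U hi) s hs hsi)] at h1
    have hprod : (∏ j ∈ E.erase i, dd (v i) Q (v j)) ≠ 0 := Finset.prod_ne_zero_iff.mpr
      (fun j hj => hD i hiE j (Finset.mem_of_mem_erase hj) (Finset.ne_of_mem_erase hj).symm)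
    have h2 := (mul_eq_zero.mp h1.symm).resolve_left hprod
    exact (mul_eq_zero.mp h2).resolve_left (hC i (hES hiE))
  rw [hE, Finset.sum_insert hAE', ← hE, Finset.sum_eq_zero hz, add_zero] at hsum
  have h1 := hL A (Finset.mem_insert_self _ _)
  rw [hsum, mul_zero, mul_zero] at h1
  refine (Finset.prod_ne_zero_iff.mpr (fun l hl => ?_)) h1
  have : dd (v A) (c A l) Q = β * dd (v A) (c A l) (v A') := by
    rw [hQ]; simp [dd]; ring
  rw [this]
  exact mul_ne_zero hβ (hne A hA l hl A' hA' hAA.symm)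

theorem plane_lemma2 [CharP F 2] {ι : Type*} [DecidableEq ι] (S : Finset ι) (v : ι → Fin 3 → F)
    (harc : ∀ a ∈ S, ∀ b ∈ S, ∀ c ∈ S, a ≠ b → a ≠ c → b ≠ c → dd (v a) (v b) (v c) ≠ 0)
    (A A' : ι) (hA : A ∈ S) (hA' : A' ∈ S) (hAA : A ≠ A')
    (α β : F) (hβ : β ≠ 0) (Q : Fin 3 → F) (hQ : Q = α • v A + β • v A')
    (U : Finset ι) (hU : U ⊆ S) (hUt : ∀ R ∈ U, ∀ R' ∈ S, R' ≠ R → dd (v R) Q (v R') ≠ 0) :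
    U.card + S.card ≤ Fintype.card F + 2 := by
  classical
  have hm : S.card ≤ Fintype.card F + 2 := by
    have hcard : ((S.erase A).erase A').card + 2 = S.card := by
      rw [Finset.card_erase_of_mem (by simp [hA', hAA.symm]), Finset.card_erase_of_mem hA]
      have : 1 < S.card := Finset.one_lt_card.mpr ⟨A, hA, A', hA', hAA⟩
      omega
    rcases Finset.eq_empty_or_nonempty ((S.erase A).erase A') with he | ⟨w, hw⟩
    · rw [he] at hcard; simp at hcard; omega
    · simp only [Finset.mem_erase] at hw
      have hAw : dd (v A) (v w) (v A') ≠ 0 := harc A hA w hw.2.2 A' hA' hw.2.1.symm hAA hw.1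
      have h1 : ∀ s ∈ (S.erase A).erase A', dd (v A) (v A') (v s) ≠ 0 := by
        intro s hs
        simp only [Finset.mem_erase] at hs
        exact harc A hA A' hA' s hs.2.2 hAA hs.2.1.symm hs.1.symm
      have : ((S.erase A).erase A').card ≤ (Finset.univ : Finset F).card := by
        apply Finset.card_le_card_of_injOn (fun s => dd (v A) (v w) (v s) / dd (v A) (v A') (v s))
        · intro s _; simp
        · intro s hs t ht hst
          have hs1 := h1 s hs
          have ht1 := h1 t ht
          simp only at hst
          rw [div_eq_div_iff hs1 ht1] at hst
          by_contra hne
          have hpl := dd_pl (v A) (v w) (v A') (v s) (v t)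
          rw [hst, mul_comm, sub_self] at hpl
          simp only [Finset.coe_erase, Set.mem_sdiff, Finset.mem_coe, Set.mem_singleton_iff] at hs ht
          exact mul_ne_zero hAw (harc A hA s hs.1.1 t ht.1.1 (fun h => hs.1.2 h.symm) (fun h => ht.1.2 h.symm) hne) hpl.symm
      rw [Finset.card_univ] at this
      omega
  obtain ⟨f, hf⟩ := Nat.exists_eq_add_of_le hm
  have := plane_lemma S v harc f hf.symm A A' hA hA' hAA α β hβ Q hQ U hU hUt
  omega
end planepart3


/-- incidence properties used for the quotient projective 3-space -/
structure Space3 {X : Type*} [DecidableEq X] (q : ℕ) (ℓ : X → X → Finset X) (Pl : Finset (Finset X)) : Prop where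
  card_line : ∀ x y, x ≠ y → (ℓ x y).card = q + 1
  left_mem : ∀ x y, x ≠ y → x ∈ ℓ x y
  right_mem : ∀ x y, x ≠ y → y ∈ ℓ x y
  line_eq : ∀ x y z w, x ≠ y → z ∈ ℓ x y → w ∈ ℓ x y → z ≠ w → ℓ z w = ℓ x y
  card_plane : ∀ H ∈ Pl, H.card = q ^ 2 + q + 1
  plane_line : ∀ H ∈ Pl, ∀ x ∈ H, ∀ y ∈ H, x ≠ y → ℓ x y ⊆ H
  plane_inter : ∀ H ∈ Pl, ∀ H' ∈ Pl, H ≠ H' → (H ∩ H').card ≤ q + 1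
  plane_ex : ∀ x y z, x ≠ y → z ∉ ℓ x y → ∃ H ∈ Pl, ℓ x y ⊆ H ∧ z ∈ H

section structurepart
variable {X : Type*} [DecidableEq X]

theorem incl_excl (lam : ℕ) (S : Finset (Finset X)) (T : Finset X)
    (hS : ∀ A ∈ S, ∀ B ∈ S, A ≠ B → (A ∩ B).card ≤ lam) :
    2 * ∑ A ∈ S, (A ∩ T).card + lam * S.card ≤ 2 * (S.biUnion (fun A => A ∩ T)).card + lam * S.card ^ 2 := by
  induction S using Finset.induction_on with
  | empty => simp
  | insert A S hA ih =>
    have ih' := ih (fun B hB C hC h => hS B (Finset.mem_insert_of_mem hB) C (Finset.mem_insert_of_mem hC) h)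
    rw [Finset.sum_insert hA, Finset.biUnion_insert, Finset.card_insert_of_notMem hA]
    have h1 := Finset.card_union_add_card_inter (A ∩ T) (S.biUnion (fun A => A ∩ T))
    have h2 : ((A ∩ T) ∩ S.biUnion (fun A => A ∩ T)).card ≤ S.card * lam := by
      rw [Finset.inter_biUnion]
      apply Finset.card_biUnion_le_card_mul
      intro B hB
      refine (Finset.card_le_card ?_).trans (hS A (Finset.mem_insert_self _ _) B (Finset.mem_insert_of_mem hB) (fun h => hA (h ▸ hB)))
      intro x; simp only [Finset.mem_inter]; tauto
    nlinarith

/-- Points of T on the line xy other than x. -/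
def ee (ℓ : X → X → Finset X) (T : Finset X) (x y : X) : ℕ := ((ℓ x y ∩ T).erase x).card

variable {q : ℕ} {ℓ : X → X → Finset X} {Pl : Finset (Finset X)}

theorem Space3.comm (h : Space3 q ℓ Pl) (x y : X) (hxy : x ≠ y) : ℓ y x = ℓ x y :=
  h.line_eq x y y x hxy (h.right_mem x y hxy) (h.left_mem x y hxy) hxy.symm

theorem heavy_exists (h : Space3 q ℓ Pl) (hq : 2048 ≤ q) (T : Finset X)
    (hT : T.card + 100 * q ≤ 3 * q ^ 2)
    (hstar : ∀ x ∈ T, q ^ 3 + q ^ 2 + q + 1 ≤ T.card + ∑ y ∈ T.erase x, ee ℓ T x y)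
    (x : X) (hx : x ∈ T) : ∃ H ∈ Pl, x ∈ H ∧ q ^ 2 ≤ 10 * (H ∩ T).card := by
  obtain ⟨y, hy, hey⟩ : ∃ y ∈ T.erase x, q + 1 ≤ 3 * ee ℓ T x y + 3 := by
    by_contra hcon
    push Not at hcon
    have h1 : ∑ y ∈ T.erase x, (3 * ee ℓ T x y + 3) ≤ ∑ y ∈ T.erase x, q :=
      Finset.sum_le_sum (fun y hy => by have := hcon y hy; omega)
    rw [Finset.sum_add_distrib, ← Finset.mul_sum] at h1
    simp only [Finset.sum_const, smul_eq_mul, Finset.card_erase_of_mem hx] at h1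
    have h2 := hstar x hx
    have h3 : 1 ≤ T.card := Finset.card_pos.mpr ⟨x, hx⟩
    obtain ⟨m, hm⟩ := Nat.exists_eq_add_of_le h3
    rw [hm] at h1 h2 hT
    simp only [Nat.add_sub_cancel_left] at h1
    nlinarith
  have hyx : x ≠ y := (Finset.ne_of_mem_erase hy).symm
  have hyT := Finset.mem_of_mem_erase hy
  set L := ℓ x y with hL
  have hxL : x ∈ L := h.left_mem x y hyx
  set l := (L ∩ T).card with hl
  have hle : ee ℓ T x y + 1 = l := by
    rw [hl, ee, Finset.card_erase_add_one]
    simp [hx, hxL, ← hL]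
  by_contra hcon
  push Not at hcon
  -- small planes
  have hsmall : ∀ z ∈ T \ L, ∃ H ∈ Pl, L ⊆ H ∧ z ∈ H ∧ 9 * ((H ∩ T) \ L).card + 6 * (q+1) ≤ (q + 1) * q := by
    intro z hz
    obtain ⟨H, hH, hLH, hzH⟩ := h.plane_ex x y z hyx (Finset.mem_sdiff.mp hz).2
    refine ⟨H, hH, hLH, hzH, ?_⟩
    have h1 := hcon H hH (hLH hxL)
    have h2 : ((H ∩ T) \ L).card ≤ (H ∩ T).card := Finset.card_le_card Finset.sdiff_subset
    nlinarith
  -- inner bound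
  have hin : ∀ z ∈ T \ L, 9 * ∑ y' ∈ L ∩ T, ee ℓ T y' z + 6 * (q + 1) ≤ 9 * l + (q + 1) * q := by
    intro z hz
    obtain ⟨H, hH, hLH, hzH, hc⟩ := hsmall z hz
    rw [Finset.mem_sdiff] at hz
    have hne : ∀ y' ∈ L ∩ T, y' ≠ z := by
      rintro y' hy' rfl
      exact hz.2 (Finset.mem_inter.mp hy').1
    have h1 : ∀ y' ∈ L ∩ T, ee ℓ T y' z = 1 + (((ℓ y' z ∩ T).erase y').erase z).card := by
      intro y' hy'
      rw [ee, add_comm, Finset.card_erase_add_one]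
      simp [hz.1, (hne y' hy').symm, h.right_mem y' z (hne y' hy')]
    rw [Finset.sum_congr rfl h1, Finset.sum_add_distrib]
    simp only [Finset.sum_const, smul_eq_mul, mul_one, ← hl]
    have h2 : ∑ y' ∈ L ∩ T, (((ℓ y' z ∩ T).erase y').erase z).card ≤ ((H ∩ T) \ L).card := by
      rw [← Finset.card_biUnion]
      · apply Finset.card_le_card
        intro w hw
        simp only [Finset.mem_biUnion, Finset.mem_erase, Finset.mem_inter, Finset.mem_sdiff] at hw ⊢
        obtain ⟨y', ⟨hy'L, hy'T⟩, hwz, hwy, hwl, hwT⟩ := hw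
        have hy'z := hne y' (by simp [hy'L, hy'T])
        refine ⟨⟨h.plane_line H hH y' (hLH hy'L) z hzH hy'z hwl, hwT⟩, ?_⟩
        intro hwL
        have e1 := h.line_eq x y y' w hyx hy'L hwL hwy.symm
        have e2 := h.line_eq y' z y' w hy'z (h.left_mem _ _ hy'z) hwl hwy.symm
        apply hz.2
        rw [hL, ← e1, e2]
        exact h.right_mem _ _ hy'z
      · intro a ha b hb hab
        rw [Function.onFun, Finset.disjoint_left]
        intro w hwa hwb
        simp only [Finset.mem_erase, Finset.mem_inter] at hwa hwb
        have haz := hne a ha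
        have hbz := hne b hb
        have e1 := h.line_eq a z w z haz hwa.2.2.1 (h.right_mem _ _ haz) hwa.1
        have e2 := h.line_eq b z w z hbz hwb.2.2.1 (h.right_mem _ _ hbz) hwb.1
        have ham : a ∈ ℓ b z := by rw [← e2, e1]; exact h.left_mem _ _ haz
        have e3 := h.line_eq b z a b hbz ham (h.left_mem _ _ hbz) hab
        have e4 := h.line_eq x y a b hyx (Finset.mem_inter.mp ha).1 (Finset.mem_inter.mp hb).1 hab
        apply hz.2
        rw [hL, ← e4, e3]
        exact h.right_mem _ _ hbz
    nlinarith
  -- sum over points of L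
  have hlq : l ≤ q + 1 := by
    rw [hl, ← h.card_line x y hyx]; exact Finset.card_le_card Finset.inter_subset_left
  have hsplit : ∀ y' ∈ L ∩ T, ∑ z ∈ T.erase y', ee ℓ T y' z ≤ q ^ 2 + ∑ z ∈ T \ L, ee ℓ T y' z := by
    intro y' hy'
    have hyy := Finset.mem_inter.mp hy'
    have e : T.erase y' = (L ∩ T).erase y' ∪ (T \ L) := by
      ext w
      simp only [Finset.mem_erase, Finset.mem_union, Finset.mem_inter, Finset.mem_sdiff]
      constructor
      · intro hw; by_cases hwL : w ∈ L <;> tauto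
      · rintro (hw | hw)
        · tauto
        · exact ⟨fun h => hw.2 (h ▸ hyy.1), hw.1⟩
    rw [e, Finset.sum_union]
    · gcongr
      have : ∀ z ∈ (L ∩ T).erase y', ee ℓ T y' z ≤ q := by
        intro z hz
        simp only [Finset.mem_erase, Finset.mem_inter] at hz
        have hc := h.card_line y' z hz.1.symm
        have h1 : ee ℓ T y' z ≤ ((ℓ y' z).erase y').card := by
          apply Finset.card_le_card
          intro w; simp only [Finset.mem_erase, Finset.mem_inter]; tauto
        rw [Finset.card_erase_of_mem (h.left_mem _ _ hz.1.symm), hc] at h1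
        omega
      refine (Finset.sum_le_card_nsmul _ _ q this).trans ?_
      rw [Finset.card_erase_of_mem hy', smul_eq_mul, ← hl, sq]
      exact Nat.mul_le_mul_right _ (by omega)
    · rw [Finset.disjoint_left]
      intro w hw hw2
      simp only [Finset.mem_erase, Finset.mem_inter, Finset.mem_sdiff] at hw hw2
      exact hw2.2 hw.2.1
  have htot : l * (q ^ 3 + q ^ 2 + q + 1) ≤ l * T.card + (l * q ^ 2 + ∑ z ∈ T \ L, ∑ y' ∈ L ∩ T, ee ℓ T y' z) := by
    have : ∑ y' ∈ L ∩ T, (q ^ 3 + q ^ 2 + q + 1) ≤ ∑ y' ∈ L ∩ T, (T.card + (q ^ 2 + ∑ z ∈ T \ L, ee ℓ T y' z)) := by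
      apply Finset.sum_le_sum
      intro y' hy'
      exact (hstar y' (Finset.mem_inter.mp hy').2).trans (by have := hsplit y' hy'; omega)
    rw [Finset.sum_comm]
    rw [Finset.sum_add_distrib (f := fun _ => T.card), Finset.sum_add_distrib (f := fun _ => q ^ 2)] at this
    simpa only [Finset.sum_const, smul_eq_mul, ← hl] using this
  have hin2 : 9 * ∑ z ∈ T \ L, ∑ y' ∈ L ∩ T, ee ℓ T y' z + T.card * (6 * (q + 1)) ≤ T.card * (9 * l + (q + 1) * q) := by
    have hc : (T \ L).card ≤ T.card := Finset.card_le_card Finset.sdiff_subset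
    have := Finset.sum_le_sum hin
    rw [Finset.sum_add_distrib, ← Finset.mul_sum] at this
    simp only [Finset.sum_const, smul_eq_mul] at this
    have h6 : 6 * (q + 1) ≤ 9 * l + (q + 1) * q := by nlinarith
    obtain ⟨d, hd⟩ := Nat.exists_eq_add_of_le hc
    rw [hd]
    nlinarith
  generalize (∑ z ∈ T \ L, ∑ y' ∈ L ∩ T, ee ℓ T y' z) = sg at htot hin2
  have hl3 : q + 1 ≤ 3 * l := by omega
  generalize T.card = n at *
  clear_value l
  clear hsmall hin hsplit hcon hstar hle hey
  zify at *
  set Q : ℤ := (q : ℤ)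
  have k1 : (l : ℤ) * 9 * (Q ^ 3 + Q + 1 - 2 * n) ≤ n * ((Q + 1) * (Q - 6)) := by nlinarith
  have k2 : (n : ℤ) * ((Q + 1) * (Q - 6)) ≤ (3 * Q ^ 2 - 100 * Q) * ((Q + 1) * (Q - 6)) := by
    apply mul_le_mul_of_nonneg_right (by linarith)
    apply mul_nonneg <;> linarith
  have k3 : 3 * (Q + 1) * (Q ^ 3 - 6 * Q ^ 2 + 200 * Q) ≤ (l : ℤ) * 9 * (Q ^ 3 + Q + 1 - 2 * n) := by
    have : 0 ≤ Q ^ 3 - 6 * Q ^ 2 + 200 * Q := by nlinarith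
    calc 3 * (Q + 1) * (Q ^ 3 - 6 * Q ^ 2 + 200 * Q) ≤ (l * 9) * (Q ^ 3 - 6 * Q ^ 2 + 200 * Q) := by
          apply mul_le_mul_of_nonneg_right _ this; linarith
      _ ≤ _ := by
          apply mul_le_mul_of_nonneg_left _ (by positivity); linarith
  have k4 : 3 * (Q + 1) * (Q ^ 3 - 6 * Q ^ 2 + 200 * Q) ≤ (3 * Q ^ 2 - 100 * Q) * ((Q + 1) * (Q - 6)) := by linarith
  have k5 : 3 * (Q ^ 3 - 6 * Q ^ 2 + 200 * Q) ≤ (3 * Q ^ 2 - 100 * Q) * (Q - 6) := by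
    have : (Q + 1) * (3 * (Q ^ 3 - 6 * Q ^ 2 + 200 * Q)) ≤ (Q + 1) * ((3 * Q ^ 2 - 100 * Q) * (Q - 6)) := by linarith
    exact le_of_mul_le_mul_left this (by linarith)
  nlinarith
end structurepart


section structurepart2
variable {X : Type*} [DecidableEq X]
variable {q : ℕ} {ℓ : X → X → Finset X} {Pl : Finset (Finset X)}

theorem few_planes (h : Space3 q ℓ Pl) (T : Finset X) (𝓗 : Finset (Finset X)) (h𝓗 : 𝓗 ⊆ Pl)
    (m c : ℕ) (hm : m ≤ 𝓗.card) (hc : ∀ H ∈ 𝓗, c ≤ (H ∩ T).card) :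
    2 * (m * c) + (q + 1) * m ≤ 2 * T.card + (q + 1) * m ^ 2 := by
  obtain ⟨S, hS, hSc⟩ := Finset.exists_subset_card_eq hm
  have h1 := incl_excl (q + 1) S T (fun A hA B hB hne =>
    h.plane_inter A (h𝓗 (hS hA)) B (h𝓗 (hS hB)) hne)
  have h2 : m * c ≤ ∑ A ∈ S, (A ∩ T).card := by
    rw [← hSc, ← smul_eq_mul]
    exact Finset.card_nsmul_le_sum S _ c (fun A hA => hc A (hS hA))
  have h3 : (S.biUnion (fun A => A ∩ T)).card ≤ T.card := by
    apply Finset.card_le_card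
    intro x hx
    simp only [Finset.mem_biUnion, Finset.mem_inter] at hx
    obtain ⟨_, _, _, hx⟩ := hx
    exact hx
  rw [hSc] at h1
  omega

/-- generic points of H -/
def gen (T : Finset X) (𝓗 : Finset (Finset X)) (H : Finset X) : Finset X :=
  (H ∩ T).filter (fun x => ∀ H' ∈ 𝓗, x ∈ H' → H' = H)

theorem gen_card (h : Space3 q ℓ Pl) (T : Finset X) (𝓗 : Finset (Finset X)) (h𝓗 : 𝓗 ⊆ Pl) (H) (hH : H ∈ 𝓗) :
    (H ∩ T).card + (q + 1) ≤ (gen T 𝓗 H).card + 𝓗.card * (q + 1) := by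
  have h1 : (H ∩ T) ⊆ gen T 𝓗 H ∪ (𝓗.erase H).biUnion (fun H' => H ∩ H') := by
    intro x hx
    simp only [gen, Finset.mem_union, Finset.mem_filter, Finset.mem_biUnion, Finset.mem_erase]
    by_cases hg : ∀ H' ∈ 𝓗, x ∈ H' → H' = H
    · exact Or.inl ⟨hx, hg⟩
    · push Not at hg
      obtain ⟨H', h1, h2, h3⟩ := hg
      exact Or.inr ⟨H', ⟨h3, h1⟩, Finset.mem_inter.mpr ⟨(Finset.mem_inter.mp hx).1, h2⟩⟩
  have h2 := (Finset.card_le_card h1).trans (Finset.card_union_le _ _)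
  have h3 : ((𝓗.erase H).biUnion (fun H' => H ∩ H')).card ≤ (𝓗.erase H).card * (q + 1) := by
    apply Finset.card_biUnion_le_card_mul
    intro H' hH'
    rw [Finset.mem_erase] at hH'
    exact h.plane_inter H (h𝓗 hH) H' (h𝓗 hH'.2) hH'.1.symm
  have h4 : (𝓗.erase H).card + 1 = 𝓗.card := Finset.card_erase_add_one hH
  rw [← h4]
  nlinarith

theorem gen_e (h : Space3 q ℓ Pl) (T : Finset X) (𝓗 : Finset (Finset X)) (h𝓗 : 𝓗 ⊆ Pl)
    (hcov : ∀ x ∈ T, ∃ H ∈ 𝓗, x ∈ H) (H) (hH : H ∈ 𝓗) (x) (hx : x ∈ gen T 𝓗 H) (y) (hy : y ∈ T \ H) :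
    ee ℓ T x y + 1 ≤ 𝓗.card := by
  classical
  rw [← Finset.card_erase_add_one hH]
  gcongr
  simp only [gen, Finset.mem_filter, Finset.mem_inter] at hx
  rw [Finset.mem_sdiff] at hy
  have hxy : x ≠ y := by rintro rfl; exact hy.2 hx.1.1
  choose! φ hφ1 hφ2 using hcov
  have hφx : ∀ z ∈ (ℓ x y ∩ T).erase x, φ z ≠ H ∧ x ∉ φ z := by
    intro z hz
    simp only [Finset.mem_erase, Finset.mem_inter] at hz
    have hne : φ z ≠ H := by
      intro he
      have hzH : z ∈ H := he ▸ hφ2 z hz.2.2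
      apply hy.2
      have := h.plane_line H (h𝓗 hH) x hx.1.1 z hzH hz.1.symm
      rw [h.line_eq x y x z hxy (h.left_mem _ _ hxy) hz.2.1 hz.1.symm] at this
      exact this (h.right_mem _ _ hxy)
    exact ⟨hne, fun hxm => hne (hx.2 _ (hφ1 z hz.2.2) hxm)⟩
  apply Finset.card_le_card_of_injOn φ
  · intro z hz
    have := hφx z hz
    simp only [Finset.coe_erase, Set.mem_sdiff, Finset.mem_coe, Finset.mem_inter, Set.mem_singleton_iff] at hz ⊢
    exact ⟨hφ1 z hz.1.2, this.1⟩
  · intro z hz w hw hzw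
    by_contra hne
    have hzx := hφx z hz
    simp only [Finset.coe_erase, Set.mem_sdiff, Finset.mem_coe, Finset.mem_inter, Set.mem_singleton_iff] at hz hw
    apply hzx.2
    have := h.plane_line (φ z) (h𝓗 (hφ1 z hz.1.2)) z (hφ2 z hz.1.2) w (hzw ▸ hφ2 w hw.1.2) hne
    rw [h.line_eq x y z w hxy hz.1.1 hw.1.1 hne] at this
    exact this (h.left_mem _ _ hxy)

theorem gen_sum (h : Space3 q ℓ Pl) (T : Finset X) (𝓗 : Finset (Finset X)) (h𝓗 : 𝓗 ⊆ Pl)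
    (hcov : ∀ x ∈ T, ∃ H ∈ 𝓗, x ∈ H) (H) (hH : H ∈ 𝓗) (x) (hx : x ∈ gen T 𝓗 H) :
    ∑ y ∈ T.erase x, ee ℓ T x y + (T \ H).card ≤ ∑ y ∈ (H ∩ T).erase x, ee ℓ T x y + (T \ H).card * 𝓗.card := by
  have hx' := hx
  simp only [gen, Finset.mem_filter, Finset.mem_inter] at hx'
  have e : T.erase x = (H ∩ T).erase x ∪ (T \ H) := by
    ext w
    simp only [Finset.mem_erase, Finset.mem_union, Finset.mem_inter, Finset.mem_sdiff]
    constructor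
    · intro hw; by_cases hwL : w ∈ H <;> tauto
    · rintro (hw | hw)
      · tauto
      · exact ⟨fun h => hw.2 (h ▸ hx'.1.1), hw.1⟩
  rw [e, Finset.sum_union]
  · have : ∑ y ∈ T \ H, (ee ℓ T x y + 1) ≤ (T \ H).card * 𝓗.card := by
      rw [← smul_eq_mul]
      exact Finset.sum_le_card_nsmul _ _ _ (fun y hy => gen_e h T 𝓗 h𝓗 hcov H hH x hx y hy)
    rw [Finset.sum_add_distrib] at this
    simp only [Finset.sum_const, smul_eq_mul, mul_one] at this
    omega
  · rw [Finset.disjoint_left]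
    intro w hw hw2
    simp only [Finset.mem_erase, Finset.mem_inter, Finset.mem_sdiff] at hw hw2
    exact hw2.2 hw.2.1

theorem ee_le (h : Space3 q ℓ Pl) (T : Finset X) (x y : X) (hxy : x ≠ y) : ee ℓ T x y ≤ q := by
  have h1 : ee ℓ T x y ≤ ((ℓ x y).erase x).card := by
    apply Finset.card_le_card
    intro w; simp only [Finset.mem_erase, Finset.mem_inter]; tauto
  rw [Finset.card_erase_of_mem (h.left_mem _ _ hxy), h.card_line x y hxy] at h1
  omega

/-- sum in the plane -/
theorem plane_sum (h : Space3 q ℓ Pl) (T : Finset X) (H) (hH : H ∈ Pl) (x) (hx : x ∈ H ∩ T) :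
    ∑ y ∈ (H ∩ T).erase x, ee ℓ T x y + q + 2 * (q * (H \ T).card)
      = q * (q ^ 2 + q + 1) + ∑ z ∈ H \ T, ((ℓ x z) ∩ (H \ T)).card := by
  have hx' := Finset.mem_inter.mp hx
  have hc1 : (H ∩ T).card + (H \ T).card = q ^ 2 + q + 1 := by
    rw [Finset.card_inter_add_card_sdiff, h.card_plane H hH]
  have h1 : ∀ y ∈ (H ∩ T).erase x, ee ℓ T x y + ((ℓ x y) ∩ (H \ T)).card = q := by
    intro y hy
    simp only [Finset.mem_erase, Finset.mem_inter] at hy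
    have hsub := h.plane_line H hH x hx'.1 y hy.2.1 hy.1.symm
    rw [ee, Finset.card_erase_of_mem (by simp [hx'.2, h.left_mem x y hy.1.symm])]
    have h2 : (ℓ x y) ∩ (H \ T) = ℓ x y \ T := by
      ext w; simp only [Finset.mem_inter, Finset.mem_sdiff]
      constructor
      · tauto
      · intro hw; exact ⟨hw.1, hsub hw.1, hw.2⟩
    have h3 := Finset.card_inter_add_card_sdiff (ℓ x y) T
    rw [h.card_line x y hy.1.symm] at h3
    have h4 : 1 ≤ (ℓ x y ∩ T).card := Finset.card_pos.mpr ⟨x, by simp [hx'.2, h.left_mem x y hy.1.symm]⟩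
    rw [h2]; omega
  have h2 : ∑ y ∈ (H ∩ T).erase x, ((ℓ x y) ∩ (H \ T)).card = ∑ z ∈ H \ T, ((ℓ x z ∩ T).erase x).card := by
    have e1 : ∀ y ∈ (H ∩ T).erase x, ((ℓ x y) ∩ (H \ T)).card = ∑ z ∈ H \ T, if z ∈ ℓ x y then 1 else 0 := by
      intro y _
      rw [← Finset.card_filter, Finset.inter_comm, ← Finset.filter_mem_eq_inter]
    rw [Finset.sum_congr rfl e1, Finset.sum_comm]
    apply Finset.sum_congr rfl
    intro z hz
    rw [← Finset.card_filter]
    congr 1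
    ext y
    rw [Finset.mem_sdiff] at hz
    have hxz : x ≠ z := by rintro rfl; exact hz.2 hx'.2
    simp only [Finset.mem_filter, Finset.mem_erase, Finset.mem_inter]
    constructor
    · rintro ⟨⟨hyx, hyH, hyT⟩, hzl⟩
      refine ⟨hyx, ?_, hyT⟩
      rw [h.line_eq x y x z hyx.symm (h.left_mem _ _ hyx.symm) hzl hxz]
      exact h.right_mem _ _ hyx.symm
    · rintro ⟨hyx, hyl, hyT⟩
      refine ⟨⟨hyx, h.plane_line H hH x hx'.1 z hz.1 hxz hyl, hyT⟩, ?_⟩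
      rw [h.line_eq x z x y hxz (h.left_mem _ _ hxz) hyl hyx.symm]
      exact h.right_mem _ _ hxz
  have h3 : ∀ z ∈ H \ T, ((ℓ x z ∩ T).erase x).card + ((ℓ x z) ∩ (H \ T)).card = q := by
    intro z hz
    rw [Finset.mem_sdiff] at hz
    have hxz : x ≠ z := by rintro rfl; exact hz.2 hx'.2
    have hsub := h.plane_line H hH x hx'.1 z hz.1 hxz
    rw [Finset.card_erase_of_mem (by simp [hx'.2, h.left_mem x z hxz])]
    have h2 : (ℓ x z) ∩ (H \ T) = ℓ x z \ T := by
      ext w; simp only [Finset.mem_inter, Finset.mem_sdiff]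
      constructor
      · tauto
      · intro hw; exact ⟨hw.1, hsub hw.1, hw.2⟩
    have h3 := Finset.card_inter_add_card_sdiff (ℓ x z) T
    rw [h.card_line x z hxz] at h3
    have h4 : 1 ≤ (ℓ x z ∩ T).card := Finset.card_pos.mpr ⟨x, by simp [hx'.2, h.left_mem x z hxz]⟩
    rw [h2]; omega
  have s1 := Finset.sum_congr rfl h1
  rw [Finset.sum_add_distrib, h2] at s1
  have s3 := Finset.sum_congr rfl h3
  rw [Finset.sum_add_distrib] at s3
  simp only [Finset.sum_const, smul_eq_mul] at s1 s3
  have hce := Finset.card_erase_add_one hx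
  have : q * (q ^ 2 + q + 1) = q * (((H ∩ T).erase x).card + 1 + (H \ T).card) := by rw [hce, hc1]
  rw [this]
  nlinarith

/-- averaging -/
theorem avg_Z (h : Space3 q ℓ Pl) (G D : Finset X) (hGD : ∀ x ∈ G, x ∉ D) :
    ∑ x ∈ G, ∑ z ∈ D, ((ℓ x z) ∩ D).card ≤ D.card * G.card + D.card ^ 2 * (q + 1) := by
  rw [Finset.sum_comm]
  have : ∀ z ∈ D, ∑ x ∈ G, ((ℓ x z) ∩ D).card ≤ G.card + D.card * (q + 1) := by
    intro z hz
    have e1 : ∀ x ∈ G, ((ℓ x z) ∩ D).card = ∑ w ∈ D, if w ∈ ℓ x z then 1 else 0 := by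
      intro y _
      rw [← Finset.card_filter, Finset.inter_comm, ← Finset.filter_mem_eq_inter]
    rw [Finset.sum_congr rfl e1, Finset.sum_comm, ← Finset.add_sum_erase D _ hz]
    gcongr
    · refine (Finset.sum_le_card_nsmul _ _ 1 ?_).trans (by simp)
      intro x _; split_ifs <;> simp
    · refine (Finset.sum_le_card_nsmul _ _ (q + 1) ?_).trans ?_
      · intro w hw
        rw [Finset.mem_erase] at hw
        rw [← Finset.card_filter, ← h.card_line z w hw.1.symm]
        apply Finset.card_le_card
        intro x hx
        rw [Finset.mem_filter] at hx
        have hxz : x ≠ z := by rintro rfl; exact hGD _ hx.1 hz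
        rw [h.line_eq x z z w hxz (h.right_mem _ _ hxz) hx.2 hw.1.symm]
        exact h.left_mem _ _ hxz
      · rw [smul_eq_mul]
        exact Nat.mul_le_mul_right _ (Finset.card_le_card (Finset.erase_subset _ _))
  refine (Finset.sum_le_card_nsmul _ _ _ this).trans ?_
  rw [smul_eq_mul]
  nlinarith

theorem structure_lemma (h : Space3 q ℓ Pl) (hq : 2048 ≤ q) (T : Finset X) (hTne : T.Nonempty)
    (hT : T.card + 100 * q ≤ 3 * q ^ 2)
    (hstar : ∀ x ∈ T, q ^ 3 + q ^ 2 + q + 1 ≤ T.card + ∑ y ∈ T.erase x, ee ℓ T x y) :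
    (∃ H ∈ Pl, 5 * (H \ T).card ≤ 3 * q) ∨
    (∃ H ∈ Pl, ∃ H' ∈ Pl, H ≠ H' ∧ 5 * (H \ T).card ≤ 8 * q ∧ 5 * (H' \ T).card ≤ 8 * q) := by
  classical
  set 𝓗 := Pl.filter (fun H => q ^ 2 ≤ 10 * (H ∩ T).card) with h𝓗def
  have h𝓗 : 𝓗 ⊆ Pl := Finset.filter_subset _ _
  have hcov : ∀ x ∈ T, ∃ H ∈ 𝓗, x ∈ H := by
    intro x hx
    obtain ⟨H, hH, hxH, hc⟩ := heavy_exists h hq T hT hstar x hx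
    exact ⟨H, by simp [h𝓗def, hH, hc], hxH⟩
  have hheavy : ∀ H ∈ 𝓗, q ^ 2 ≤ 10 * (H ∩ T).card := by
    intro H hH; simp only [h𝓗def, Finset.mem_filter] at hH; exact hH.2
  have hcT : ∀ H, (H ∩ T).card + (T \ H).card = T.card := by
    intro H; rw [Finset.inter_comm, Finset.card_inter_add_card_sdiff]
  -- at most 35
  have h35 : 𝓗.card ≤ 35 := by
    by_contra hcon
    have := few_planes h T 𝓗 h𝓗 36 ((q ^ 2 + 9) / 10) (by omega) (fun H hH => by have := hheavy H hH; omega)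
    have h2 : q ^ 2 ≤ 10 * ((q ^ 2 + 9) / 10) := by omega
    nlinarith
  have hgen : ∀ H ∈ 𝓗, (gen T 𝓗 H).Nonempty := by
    intro H hH
    have h1 := gen_card h T 𝓗 h𝓗 H hH
    have h2 := hheavy H hH
    rw [← Finset.card_pos]
    have : 𝓗.card * (q + 1) ≤ 35 * (q + 1) := Nat.mul_le_mul_right _ h35
    nlinarith
  have hmain : ∀ H ∈ 𝓗, q ^ 3 + q ^ 2 + 2 * q + 1 + (T \ H).card ≤ T.card + q * (H ∩ T).card + (T \ H).card * 𝓗.card := by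
    intro H hH
    obtain ⟨x, hx⟩ := hgen H hH
    have hx' := hx
    simp only [gen, Finset.mem_filter] at hx'
    have h1 := gen_sum h T 𝓗 h𝓗 hcov H hH x hx
    have h2 := hstar x (Finset.mem_inter.mp hx'.1).2
    have h3 : ∑ y ∈ (H ∩ T).erase x, ee ℓ T x y ≤ ((H ∩ T).erase x).card * q := by
      rw [← smul_eq_mul]
      exact Finset.sum_le_card_nsmul _ _ _ (fun y hy => ee_le h T x y (Finset.ne_of_mem_erase hy).symm)
    have h4 := Finset.card_erase_add_one hx'.1
    rw [← h4]
    nlinarith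
  have h104 : ∀ H ∈ 𝓗, q ^ 2 ≤ (H ∩ T).card + 104 * q := by
    intro H hH
    have h1 := hmain H hH
    have h2 := hcT H
    have h3 : (T \ H).card * 𝓗.card ≤ (T \ H).card * 35 := Nat.mul_le_mul_left _ h35
    nlinarith
  have h3 : 𝓗.card ≤ 3 := by
    by_contra hcon
    have := few_planes h T 𝓗 h𝓗 4 (q ^ 2 - 104 * q) (by omega) (fun H hH => by have := h104 H hH; omega)
    have h2 : q ^ 2 ≤ (q ^ 2 - 104 * q) + 104 * q := by omega
    nlinarith
  have h7 : ∀ H ∈ 𝓗, q ^ 2 ≤ (H ∩ T).card + 7 * q := by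
    intro H hH
    have h1 := hmain H hH
    have h2 := hcT H
    have h3 : (T \ H).card * 𝓗.card ≤ (T \ H).card * 3 := Nat.mul_le_mul_left _ h3
    have h4 := h104 H hH
    nlinarith
  have h2 : 𝓗.card ≤ 2 := by
    by_contra hcon
    have := few_planes h T 𝓗 h𝓗 3 (q ^ 2 - 7 * q) (by omega) (fun H hH => by have := h7 H hH; omega)
    have h2 : q ^ 2 ≤ (q ^ 2 - 7 * q) + 7 * q := by omega
    nlinarith
  have hfin : ∀ H ∈ 𝓗, q ^ 3 + q ^ 2 + q + 1 + (T \ H).card + q + 2 * (q * (H \ T).card) ≤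
      T.card + q * (q ^ 2 + q + 1) + 100 * q + (T \ H).card * 𝓗.card := by
    intro H hH
    have hHP := h𝓗 hH
    have hc1 : (H ∩ T).card + (H \ T).card = q ^ 2 + q + 1 := by
      rw [Finset.card_inter_add_card_sdiff, h.card_plane H hHP]
    have hD := h7 H hH
    obtain ⟨x, hx, hZ⟩ : ∃ x ∈ gen T 𝓗 H, ∑ z ∈ H \ T, ((ℓ x z) ∩ (H \ T)).card ≤ 100 * q := by
      by_contra hcon
      push Not at hcon
      have a1 := avg_Z h (gen T 𝓗 H) (H \ T) (by
        intro x hx hx2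
        simp only [gen, Finset.mem_filter, Finset.mem_inter] at hx
        exact (Finset.mem_sdiff.mp hx2).2 hx.1.2)
      have a2 : (gen T 𝓗 H).card * (100 * q) ≤ ∑ x ∈ gen T 𝓗 H, ∑ z ∈ H \ T, ((ℓ x z) ∩ (H \ T)).card := by
        rw [← smul_eq_mul]
        exact Finset.card_nsmul_le_sum _ _ _ (fun x hx => (hcon x hx).le)
      have a3 := gen_card h T 𝓗 h𝓗 H hH
      have a4 : 𝓗.card * (q + 1) ≤ 2 * (q + 1) := Nat.mul_le_mul_right _ h2
      have a5 : q ^ 2 ≤ (gen T 𝓗 H).card + 8 * q + 1 := by nlinarith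
      have a6 : (H \ T).card ≤ 8 * q + 1 := by omega
      generalize (gen T 𝓗 H).card = g at *
      generalize (H \ T).card = d at *
      have a7 : d * g ≤ (8 * q + 1) * g := Nat.mul_le_mul_right _ a6
      have a8 : d ^ 2 * (q + 1) ≤ (8 * q + 1) ^ 2 * (q + 1) := by gcongr
      have a9 : g * (100 * q) ≤ (8 * q + 1) * g + (8 * q + 1) ^ 2 * (q + 1) := by omega
      have a10 : (92 * q - 1) * g ≤ (8 * q + 1) ^ 2 * (q + 1) := by
        zify [show 1 ≤ 92 * q by omega] at a9 ⊢
        linarith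
      have a11 : (92 * q - 1) * (q ^ 2 - 8 * q - 1) ≤ (92 * q - 1) * g := Nat.mul_le_mul_left _ (by omega)
      have a12 := a11.trans a10
      have : 8 * q + 1 ≤ q ^ 2 := by nlinarith
      zify [show 1 ≤ 92 * q by omega, show 8 * q ≤ q ^ 2 by nlinarith, show 1 ≤ q ^ 2 - 8 * q by omega] at a12
      have hqz : (2048 : ℤ) ≤ q := by exact_mod_cast hq
      nlinarith [mul_nonneg (show (0:ℤ) ≤ q by positivity) (show (0:ℤ) ≤ q - 2048 by linarith), mul_nonneg (show (0:ℤ) ≤ (q:ℤ)^2 by positivity) (show (0:ℤ) ≤ q - 2048 by linarith)]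
    have hx' := hx
    simp only [gen, Finset.mem_filter] at hx'
    have b1 := gen_sum h T 𝓗 h𝓗 hcov H hH x hx
    have b2 := hstar x (Finset.mem_inter.mp hx'.1).2
    have b3 := plane_sum h T H hHP x hx'.1
    omega
  obtain ⟨x0, hx0⟩ := hTne
  obtain ⟨H, hH, hxH⟩ := hcov x0 hx0
  have hpos : 1 ≤ 𝓗.card := Finset.card_pos.mpr ⟨H, hH⟩
  rcases Nat.lt_or_ge 𝓗.card 2 with hlt | hge
  · left
    have h1 : 𝓗.card = 1 := by omega
    refine ⟨H, h𝓗 hH, ?_⟩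
    have := hfin H hH
    rw [h1] at this
    have hTH : T.card ≤ q ^ 2 + q + 1 := by
      rw [← h.card_plane H (h𝓗 hH)]
      apply Finset.card_le_card
      intro x hx
      obtain ⟨H', hH', hxH'⟩ := hcov x hx
      obtain ⟨A, hA⟩ := Finset.card_eq_one.mp h1
      rw [hA, Finset.mem_singleton] at hH hH'
      rw [hH, ← hH']; exact hxH'
    by_contra hcon
    push Not at hcon
    nlinarith
  · right
    have h1 : 𝓗.card = 2 := by omega
    obtain ⟨A, B, hAB, hABe⟩ := Finset.card_eq_two.mp h1
    have hA : A ∈ 𝓗 := by rw [hABe]; simp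
    have hB : B ∈ 𝓗 := by rw [hABe]; simp
    have hTAB : T ⊆ A ∪ B := by
      intro x hx
      obtain ⟨H', hH', hxH'⟩ := hcov x hx
      rw [hABe, Finset.mem_insert, Finset.mem_singleton] at hH'
      rw [Finset.mem_union]
      rcases hH' with rfl | rfl
      · exact Or.inl hxH'
      · exact Or.inr hxH'
    have hTc : T.card ≤ 2 * (q ^ 2 + q + 1) := by
      refine (Finset.card_le_card hTAB).trans ((Finset.card_union_le _ _).trans ?_)
      rw [h.card_plane A (h𝓗 hA), h.card_plane B (h𝓗 hB)]; omega
    have hTA : (T \ A).card ≤ q ^ 2 + q + 1 := by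
      rw [← h.card_plane B (h𝓗 hB)]
      apply Finset.card_le_card
      intro x hx
      rw [Finset.mem_sdiff] at hx
      exact (Finset.mem_union.mp (hTAB hx.1)).resolve_left hx.2
    have hTB : (T \ B).card ≤ q ^ 2 + q + 1 := by
      rw [← h.card_plane A (h𝓗 hA)]
      apply Finset.card_le_card
      intro x hx
      rw [Finset.mem_sdiff] at hx
      exact (Finset.mem_union.mp (hTAB hx.1)).resolve_right hx.2
    refine ⟨A, h𝓗 hA, B, h𝓗 hB, hAB, ?_, ?_⟩
    · have := hfin A hA
      rw [h1] at this
      by_contra hcon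
      push Not at hcon
      nlinarith
    · have := hfin B hB
      rw [h1] at this
      by_contra hcon
      push Not at hcon
      nlinarith
end structurepart2


section geompart
open scoped Classical
open scoped LinearAlgebra.Projectivization
variable {F : Type*} [Field F] [Fintype F]

noncomputable instance instFintypeProj {n : ℕ} : Fintype (Projectivization F (Fin n → F)) :=
  have : Finite (Projectivization F (Fin n → F)) := inferInstance
  Fintype.ofFinite _

/-- points in a subspace -/
noncomputable def pts {n : ℕ} (S : Submodule F (Fin n → F)) : Finset (Projectivization F (Fin n → F)) :=
  Finset.univ.filter (fun x => x.rep ∈ S)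

theorem mem_pts {n : ℕ} (S : Submodule F (Fin n → F)) (x : Projectivization F (Fin n → F)) :
    x ∈ pts S ↔ x.rep ∈ S := by simp [pts]

theorem mk_rep_mem {n : ℕ} (S : Submodule F (Fin n → F)) (v : Fin n → F) (hv : v ≠ 0) :
    (Projectivization.mk F v hv).rep ∈ S ↔ v ∈ S := by
  obtain ⟨a, ha⟩ := Projectivization.exists_smul_eq_mk_rep F v hv
  rw [← ha, Units.smul_def, Submodule.smul_mem_iff _ (Units.ne_zero a)]

theorem card_pts {n : ℕ} (S : Submodule F (Fin n → F)) :
    (pts S).card * (Fintype.card F - 1) + 1 = Fintype.card F ^ finrank F S := by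
  have h := Projectivization.card' F S
  have h1 : Nat.card (Projectivization F S) = (pts S).card := by
    rw [← Nat.card_eq_finsetCard]
    apply Nat.card_congr
    refine Equiv.ofBijective (fun x => ⟨Projectivization.map S.subtype S.injective_subtype x, ?_⟩) ⟨?_, ?_⟩
    · rw [mem_pts]
      induction x using Projectivization.ind with
      | h v hv =>
        rw [Projectivization.map_mk, mk_rep_mem]
        exact v.2
    · intro x y hxy
      exact Projectivization.map_injective _ S.injective_subtype (Subtype.ext_iff.mp hxy)
    · rintro ⟨x, hx⟩
      rw [mem_pts] at hx
      refine ⟨Projectivization.mk F ⟨x.rep, hx⟩ (fun h => x.rep_nonzero (Subtype.ext_iff.mp h)), ?_⟩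
      apply Subtype.ext
      simp only [Projectivization.map_mk]
      exact Projectivization.mk_rep x
  rw [← h1, ← Nat.card_eq_fintype_card (α := F), ← Module.natCard_eq_pow_finrank (K := F) (V := S)]
  exact h.symm

theorem card_pts_two {n : ℕ} (S : Submodule F (Fin n → F)) (h : finrank F S = 2) :
    (pts S).card = Fintype.card F + 1 := by
  have h1 := card_pts S
  have h2 : 1 < Fintype.card F := Fintype.one_lt_card
  rw [h] at h1
  obtain ⟨m, hm⟩ := Nat.exists_eq_add_of_lt h2
  rw [hm] at h1 ⊢
  simp only [Nat.add_sub_cancel] at h1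
  have : (pts S).card * (1 + m) = (1 + m + 1 + 1) * (1 + m) := by linarith
  exact Nat.eq_of_mul_eq_mul_right (by omega) this

theorem card_pts_three {n : ℕ} (S : Submodule F (Fin n → F)) (h : finrank F S = 3) :
    (pts S).card = Fintype.card F ^ 2 + Fintype.card F + 1 := by
  have h1 := card_pts S
  have h2 : 1 < Fintype.card F := Fintype.one_lt_card
  rw [h] at h1
  obtain ⟨m, hm⟩ := Nat.exists_eq_add_of_lt h2
  rw [hm] at h1 ⊢
  simp only [Nat.add_sub_cancel] at h1
  refine Nat.eq_of_mul_eq_mul_right (show 0 < 1 + m by omega) ?_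
  linarith

theorem pts_top {n : ℕ} : pts (⊤ : Submodule F (Fin n → F)) = Finset.univ := by
  ext x; simp [mem_pts]

theorem card_univ_three : Fintype.card (Projectivization F (Fin 3 → F)) = Fintype.card F ^ 2 + Fintype.card F + 1 := by
  rw [← Finset.card_univ, ← pts_top, card_pts_three]; simp

theorem card_univ_four : Fintype.card (Projectivization F (Fin 4 → F)) =
    Fintype.card F ^ 3 + Fintype.card F ^ 2 + Fintype.card F + 1 := by
  have h1 := card_pts (⊤ : Submodule F (Fin 4 → F))
  rw [pts_top, Finset.card_univ, finrank_top, finrank_fin_fun] at h1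
  have h2 : 1 < Fintype.card F := Fintype.one_lt_card
  obtain ⟨m, hm⟩ := Nat.exists_eq_add_of_lt h2
  rw [hm] at h1 ⊢
  simp only [Nat.add_sub_cancel] at h1
  refine Nat.eq_of_mul_eq_mul_right (show 0 < 1 + m by omega) ?_
  linarith

theorem rep_li {n : ℕ} (x y : Projectivization F (Fin n → F)) (hxy : x ≠ y) :
    LinearIndependent F ![x.rep, y.rep] := by
  have h := (Projectivization.independent_pair_iff_ne x y).mpr hxy
  rw [Projectivization.independent_iff] at h
  have e : ![x.rep, y.rep] = Projectivization.rep ∘ ![x, y] := by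
    funext i; fin_cases i <;> rfl
  rw [e]; exact h

/-- line through two points -/
noncomputable def lineF {n : ℕ} (x y : Projectivization F (Fin n → F)) : Finset (Projectivization F (Fin n → F)) :=
  pts (Submodule.span F {x.rep, y.rep})

theorem finrank_line {n : ℕ} (x y : Projectivization F (Fin n → F)) (hxy : x ≠ y) :
    finrank F (Submodule.span F {x.rep, y.rep}) = 2 := by
  have := finrank_span_eq_card (rep_li x y hxy)
  rw [Matrix.range_cons_cons_empty] at this
  simpa using this

/-- the planes -/
noncomputable def planesF (F : Type*) [Field F] [Fintype F] : Finset (Finset (Projectivization F (Fin 4 → F))) :=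
  Finset.univ.filter (fun H => ∃ S : Submodule F (Fin 4 → F), finrank F S = 3 ∧ H = pts S)

theorem mem_planesF (H : Finset (Projectivization F (Fin 4 → F))) :
    H ∈ planesF F ↔ ∃ S : Submodule F (Fin 4 → F), finrank F S = 3 ∧ H = pts S := by
  simp [planesF]

theorem pts_inter {n : ℕ} (S S' : Submodule F (Fin n → F)) : pts S ∩ pts S' = pts (S ⊓ S') := by
  ext x; simp [mem_pts]

theorem pts_mono {n : ℕ} {S S' : Submodule F (Fin n → F)} (h : S ≤ S') : pts S ⊆ pts S' := by
  intro x; simp only [mem_pts]; exact fun hx => h hx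

theorem space3F : Space3 (Fintype.card F) (lineF (F := F) (n := 4)) (planesF F) where
  card_line x y hxy := card_pts_two _ (finrank_line x y hxy)
  left_mem x y _ := by rw [lineF, mem_pts]; exact Submodule.subset_span (by simp)
  right_mem x y _ := by rw [lineF, mem_pts]; exact Submodule.subset_span (by simp)
  line_eq x y z w hxy hz hw hzw := by
    rw [lineF, mem_pts] at hz hw
    rw [lineF, lineF]
    congr 1
    apply Submodule.eq_of_le_of_finrank_eq
    · rw [Submodule.span_le]
      intro a ha
      rcases ha with rfl | rfl
      · exact hz
      · exact hw
    · rw [finrank_line _ _ hxy, finrank_line _ _ hzw]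
  card_plane H hH := by
    obtain ⟨S, hS, rfl⟩ := (mem_planesF H).mp hH
    exact card_pts_three S hS
  plane_line H hH x hx y hy _ := by
    obtain ⟨S, hS, rfl⟩ := (mem_planesF H).mp hH
    rw [mem_pts] at hx hy
    apply pts_mono
    rw [Submodule.span_le]
    intro a ha
    rcases ha with rfl | rfl
    · exact hx
    · exact hy
  plane_inter H hH H' hH' hne := by
    obtain ⟨S, hS, rfl⟩ := (mem_planesF H).mp hH
    obtain ⟨S', hS', rfl⟩ := (mem_planesF H').mp hH'
    rw [pts_inter]
    have hlt : finrank F (S ⊓ S' : Submodule F (Fin 4 → F)) < 3 := by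
      rw [← hS]
      apply Submodule.finrank_lt_finrank_of_lt
      refine lt_of_le_of_ne inf_le_left ?_
      intro heq
      have h1 : S ≤ S' := by rw [← heq]; exact inf_le_right
      exact hne (by rw [Submodule.eq_of_le_of_finrank_eq h1 (by rw [hS, hS'])])
    have h1 := card_pts (S ⊓ S')
    have h2 : 1 < Fintype.card F := Fintype.one_lt_card
    have h3 : Fintype.card F ^ finrank F (S ⊓ S' : Submodule F (Fin 4 → F)) ≤ Fintype.card F ^ 2 :=
      Nat.pow_le_pow_right (by omega) (by omega)
    rw [← h1] at h3
    obtain ⟨m, hm⟩ := Nat.exists_eq_add_of_lt h2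
    rw [hm] at h3 ⊢
    simp only [Nat.add_sub_cancel] at h3
    refine Nat.le_of_mul_le_mul_right ?_ (show 0 < 1 + m by omega)
    linarith
  plane_ex x y z hxy hz := by
    rw [lineF, mem_pts] at hz
    refine ⟨pts (Submodule.span F {x.rep, y.rep} ⊔ Submodule.span F {z.rep}), ?_, ?_, ?_⟩
    · rw [mem_planesF]
      refine ⟨_, ?_, rfl⟩
      have h1 := Submodule.finrank_sup_add_finrank_inf_eq (Submodule.span F {x.rep, y.rep}) (Submodule.span F {z.rep})
      rw [finrank_line x y hxy, finrank_span_singleton z.rep_nonzero] at h1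
      have h2 : Submodule.span F {x.rep, y.rep} ⊓ Submodule.span F {z.rep} = ⊥ := by
        rw [← disjoint_iff]
        exact (Submodule.disjoint_span_singleton' z.rep_nonzero).mpr hz
      rw [h2, finrank_bot] at h1
      omega
    · exact pts_mono le_sup_left
    · rw [mem_pts]
      exact Submodule.mem_sup_right (Submodule.mem_span_singleton_self _)
end geompart


section geompart2
open scoped Classical
variable {F : Type*} [Field F] [Fintype F]

theorem exists_basis_ext {ι V : Type*} [Fintype ι] [AddCommGroup V] [Module F V] [FiniteDimensional F V]
    (v : ι → V) (hv : LinearIndependent F v) (n : ℕ) (hn : Fintype.card ι + n = finrank F V) :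
    ∃ b : Basis (ι ⊕ Fin n) F V, ∀ i, b (Sum.inl i) = v i := by
  let b0 := Basis.sumExtend hv
  have : Finite (ι ⊕ Basis.sumExtendIndex hv) := Module.Finite.finite_basis b0
  have hf : Finite (Basis.sumExtendIndex hv) := Finite.sum_right ι
  have : Fintype (Basis.sumExtendIndex hv) := Fintype.ofFinite _
  have hc := Module.finrank_eq_card_basis b0
  rw [Fintype.card_sum] at hc
  have e : Basis.sumExtendIndex hv ≃ Fin n := Fintype.equivFinOfCardEq (by omega)
  refine ⟨b0.reindex (Equiv.sumCongr (Equiv.refl ι) e), ?_⟩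
  intro i
  simp [b0, Basis.sumExtend]
  rfl

theorem proj_exists {m n : ℕ} (v : Fin m → Fin 5 → F) (hv : LinearIndependent F v) (hmn : m + n = 5) :
    ∃ (g : (Fin 5 → F) →ₗ[F] (Fin m → F)) (ρ : (Fin 5 → F) →ₗ[F] (Fin n → F)),
      Function.Surjective ρ ∧ (∀ i, ρ (v i) = 0) ∧ ∀ x, ρ x = 0 → x = ∑ i, g x i • v i := by
  obtain ⟨b, hb⟩ := exists_basis_ext v hv n (by simp [hmn])
  refine ⟨LinearMap.pi (fun i => b.coord (Sum.inl i)), LinearMap.pi (fun i => b.coord (Sum.inr i)), ?_, ?_, ?_⟩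
  · intro w
    refine ⟨∑ j, w j • b (Sum.inr j), ?_⟩
    funext i
    simp [Finsupp.single_apply]
  · intro i
    funext j
    rw [← hb]
    simp
  · intro x hx
    have h := b.sum_repr x
    rw [Fintype.sum_sum_type] at h
    have h2 : ∀ j, b.repr x (Sum.inr j) = 0 := fun j => congrFun hx j
    simp only [h2, zero_smul, Finset.sum_const_zero, add_zero, hb] at h
    exact h.symm

/-- cap condition on a finset of points via linear independence of representatives -/
def CapLI (K : Finset (Projectivization F (Fin 5 → F))) : Prop :=
  ∀ P ∈ K, ∀ Q ∈ K, ∀ R ∈ K, P ≠ Q → P ≠ R → Q ≠ R → LinearIndependent F ![P.rep, Q.rep, R.rep]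

/-- points of the cap on tangents through Q -/
noncomputable def tanset (K : Finset (Projectivization F (Fin 5 → F))) (Q : Fin 5 → F) :
    Finset (Projectivization F (Fin 5 → F)) :=
  K.filter (fun R => ∀ R' ∈ K, R' ≠ R → R'.rep ∉ Submodule.span F {Q, R.rep})

theorem dd_ne_of_li (g : (Fin 5 → F) →ₗ[F] (Fin 2 → F)) (ρ : (Fin 5 → F) →ₗ[F] (Fin 3 → F))
    (hgρ : ∀ x, ρ x = 0 → g x = 0 → x = 0) (y : Fin 3 → F) (i : Fin 3) (hyi : y i ≠ 0)
    (a b c : Fin 5 → F) (hli : LinearIndependent F ![a, b, c])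
    (ha : ρ a ∈ Submodule.span F {y}) (hb : ρ b ∈ Submodule.span F {y}) (hc : ρ c ∈ Submodule.span F {y}) :
    dd ![g a 0, g a 1, ρ a i] ![g b 0, g b 1, ρ b i] ![g c 0, g c 1, ρ c i] ≠ 0 := by
  intro h0
  set M : Matrix (Fin 3) (Fin 3) F := Matrix.of ![![g a 0, g a 1, ρ a i], ![g b 0, g b 1, ρ b i], ![g c 0, g c 1, ρ c i]] with hM
  have hdet : M.det = 0 := by
    rw [← h0, Matrix.det_fin_three, hM]
    simp [dd]; ring
  obtain ⟨w, hw, hwM⟩ := Matrix.exists_vecMul_eq_zero_iff.mpr hdet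
  set x := w 0 • a + w 1 • b + w 2 • c with hx
  have hcoord : ∀ j, w 0 * M 0 j + w 1 * M 1 j + w 2 * M 2 j = 0 := by
    intro j
    have := congrFun hwM j
    simpa [Matrix.vecMul, dotProduct, Fin.sum_univ_three] using this
  have hgx : g x = 0 := by
    funext j
    fin_cases j
    · have := hcoord 0
      simpa [hM, hx] using this
    · have := hcoord 1
      simpa [hM, hx] using this
  have hρi : ρ x i = 0 := by
    have := hcoord 2
    simpa [hM, hx] using this
  have hρx : ρ x ∈ Submodule.span F {y} := by
    rw [hx]
    simp only [map_add, map_smul]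
    exact add_mem (add_mem (Submodule.smul_mem _ _ ha) (Submodule.smul_mem _ _ hb)) (Submodule.smul_mem _ _ hc)
  obtain ⟨t, ht⟩ := Submodule.mem_span_singleton.mp hρx
  have ht0 : t = 0 := by
    rw [← ht] at hρi
    simp only [Pi.smul_apply, smul_eq_mul] at hρi
    exact (mul_eq_zero.mp hρi).resolve_right hyi
  have hx0 : x = 0 := hgρ x (by rw [← ht, ht0, zero_smul]) hgx
  apply hw
  rw [Fintype.linearIndependent_iff] at hli
  have := hli w (by simpa [Fin.sum_univ_three, hx] using hx0)
  funext j; exact this j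

theorem sQ_le [CharP F 2] (K : Finset (Projectivization F (Fin 5 → F))) (hK : CapLI K)
    (A A' : Projectivization F (Fin 5 → F)) (hA : A ∈ K) (hA' : A' ∈ K) (hAA : A ≠ A')
    (α β : F) (hβ : β ≠ 0) (Q : Fin 5 → F) (hQ : Q = α • A.rep + β • A'.rep) (hα : α ≠ 0) :
    (tanset K Q).card + K.card ≤ Fintype.card F ^ 3 + Fintype.card F ^ 2 + Fintype.card F + 2 := by
  obtain ⟨g, ρ, hρs, hρ0, hρg⟩ := proj_exists (n := 3) ![A.rep, A'.rep] (rep_li A A' hAA) rfl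
  have hρA : ρ A.rep = 0 := hρ0 0
  have hρA' : ρ A'.rep = 0 := hρ0 1
  have hρg' : ∀ x, ρ x = 0 → x = g x 0 • A.rep + g x 1 • A'.rep := by
    intro x hx
    have := hρg x hx
    simpa [Fin.sum_univ_two] using this
  have hgρ : ∀ x, ρ x = 0 → g x = 0 → x = 0 := by
    intro x hx hg
    rw [hρg' x hx, hg]; simp
  have hρQ : ρ Q = 0 := by rw [hQ]; simp [hρA, hρA']
  have hρne : ∀ R ∈ K, R ≠ A → R ≠ A' → ρ R.rep ≠ 0 := by
    intro R hR h1 h2 h0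
    have hli := hK R hR A hA A' hA' h1 h2 hAA
    rw [Fintype.linearIndependent_iff] at hli
    have := hli ![1, - g R.rep 0, - g R.rep 1] (by
      rw [Fin.sum_univ_three]
      simp only [Matrix.cons_val_zero, Matrix.cons_val_one, Matrix.cons_val]
      conv_lhs => enter [1, 1]; rw [hρg' R.rep h0]
      module) 0
    simp at this
  set U := tanset K Q with hU
  have hUK : U ⊆ K := Finset.filter_subset _ _
  have hAU : A ∉ U := by
    intro h
    have := (Finset.mem_filter.mp h).2 A' hA' hAA.symm
    apply this
    rw [Submodule.mem_span_pair]
    refine ⟨β⁻¹, - (β⁻¹ * α), ?_⟩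
    rw [hQ, smul_add, smul_smul, smul_smul, inv_mul_cancel₀ hβ]
    module
  have hA'U : A' ∉ U := by
    intro h
    have := (Finset.mem_filter.mp h).2 A hA hAA
    apply this
    rw [Submodule.mem_span_pair]
    refine ⟨α⁻¹, - (α⁻¹ * β), ?_⟩
    rw [hQ, smul_add, smul_smul, smul_smul, inv_mul_cancel₀ hα]
    module
  set Sy : Projectivization F (Fin 3 → F) → Finset (Projectivization F (Fin 5 → F)) :=
    fun y => K.filter (fun R => ρ R.rep ∈ Submodule.span F {y.rep}) with hSy
  have hmain : ∀ y, (U ∩ Sy y).card + (Sy y).card ≤ Fintype.card F + 2 := by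
    intro y
    obtain ⟨i, hi⟩ := Function.ne_iff.mp y.rep_nonzero
    have hmem : ∀ R ∈ Sy y, R ∈ K ∧ ρ R.rep ∈ Submodule.span F {y.rep} := fun R hR => Finset.mem_filter.mp hR
    refine plane_lemma2 (Sy y) (fun R => ![g R.rep 0, g R.rep 1, ρ R.rep i]) ?_ A A' ?_ ?_ hAA α β hβ
      ![g Q 0, g Q 1, ρ Q i] ?_ (U ∩ Sy y) Finset.inter_subset_right ?_
    · intro a ha b hb c hc hab hac hbc
      exact dd_ne_of_li g ρ hgρ y.rep i hi _ _ _ (hK a (hmem a ha).1 b (hmem b hb).1 c (hmem c hc).1 hab hac hbc)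
        (hmem a ha).2 (hmem b hb).2 (hmem c hc).2
    · simp [hSy, hA, hρA]
    · simp [hSy, hA', hρA']
    · rw [hQ]; funext j; fin_cases j <;> simp
    · intro R hR R' hR' hne
      rw [Finset.mem_inter] at hR
      have hRA : R ≠ A := fun h => hAU (h ▸ hR.1)
      have hRA' : R ≠ A' := fun h => hA'U (h ▸ hR.1)
      have hRK := hUK hR.1
      have htan := (Finset.mem_filter.mp hR.1).2 R' (hmem R' hR').1 hne
      apply dd_ne_of_li g ρ hgρ y.rep i hi _ _ _ _ (hmem R hR.2).2 (by rw [hρQ]; exact zero_mem _) (hmem R' hR').2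
      rw [Fintype.linearIndependent_iff]
      intro c hc
      rw [Fin.sum_univ_three] at hc
      simp only [Matrix.cons_val_zero, Matrix.cons_val_one, Matrix.cons_val] at hc
      have c2 : c 2 = 0 := by
        by_contra h2
        apply htan
        rw [Submodule.mem_span_pair]
        refine ⟨- ((c 2)⁻¹ * c 1), - ((c 2)⁻¹ * c 0), ?_⟩
        have e : R'.rep = (c 2)⁻¹ • (c 2 • R'.rep) := by rw [smul_smul, inv_mul_cancel₀ h2, one_smul]
        rw [e, show c 2 • R'.rep = -(c 0 • R.rep + c 1 • Q) from (eq_neg_of_add_eq_zero_right hc)]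
        module
      rw [c2, zero_smul, add_zero] at hc
      have c0 : c 0 = 0 := by
        have := congrArg ρ hc
        simp only [map_add, map_smul, hρQ, smul_zero, add_zero, map_zero] at this
        exact (smul_eq_zero.mp this).resolve_right (hρne R hRK hRA hRA')
      rw [c0, zero_smul, zero_add] at hc
      have hQ0 : Q ≠ 0 := by
        intro h
        have hl := LinearIndependent.pair_iff.mp (rep_li A A' hAA) α β (by rw [← hQ, h])
        exact hα hl.1
      have c1 := (smul_eq_zero.mp hc).resolve_right hQ0
      intro j; fin_cases j <;> assumption
  have hsum : ∑ y, ((U ∩ Sy y).card + (Sy y).card) ≤ (Fintype.card F ^ 2 + Fintype.card F + 1) * (Fintype.card F + 2) := by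
    have := Finset.sum_le_card_nsmul Finset.univ (fun y => (U ∩ Sy y).card + (Sy y).card) _ (fun y _ => hmain y)
    rw [Finset.card_univ, card_univ_three, smul_eq_mul] at this
    exact this
  rw [Finset.sum_add_distrib] at hsum
  have hin : ∀ R ∈ K, R ≠ A → R ≠ A' → ∃ y, R ∈ Sy y := by
    intro R hR h1 h2
    have hne := hρne R hR h1 h2
    refine ⟨Projectivization.mk F (ρ R.rep) hne, ?_⟩
    simp only [hSy, Finset.mem_filter]
    refine ⟨hR, ?_⟩
    obtain ⟨a, ha⟩ := Projectivization.exists_smul_eq_mk_rep F (ρ R.rep) hne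
    rw [← ha, Submodule.mem_span_singleton]
    exact ⟨((a⁻¹ : Fˣ) : F), by rw [← Units.smul_def, smul_smul, inv_mul_cancel, one_smul]⟩
  have hU1 : U.card ≤ ∑ y, (U ∩ Sy y).card := by
    refine (Finset.card_le_card ?_).trans (Finset.card_biUnion_le (s := Finset.univ) (t := fun y => U ∩ Sy y))
    intro R hR
    obtain ⟨y, hy⟩ := hin R (hUK hR) (fun h => hAU (h ▸ hR)) (fun h => hA'U (h ▸ hR))
    simp only [Finset.mem_biUnion, Finset.mem_univ, true_and, Finset.mem_inter]
    exact ⟨y, hR, hy⟩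
  have hK2 : ((K.erase A).erase A').card + 2 = K.card := by
    rw [Finset.card_erase_of_mem (by simp [hA', hAA.symm]), Finset.card_erase_of_mem hA]
    have : 1 < K.card := Finset.one_lt_card.mpr ⟨A, hA, A', hA', hAA⟩
    omega
  have hS1 : ((K.erase A).erase A').card ≤ ∑ y, (((K.erase A).erase A') ∩ Sy y).card := by
    refine (Finset.card_le_card ?_).trans (Finset.card_biUnion_le (s := Finset.univ) (t := fun y => ((K.erase A).erase A') ∩ Sy y))
    intro R hR
    have hR' := hR
    simp only [Finset.mem_erase] at hR'
    obtain ⟨y, hy⟩ := hin R hR'.2.2 hR'.2.1 hR'.1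
    simp only [Finset.mem_biUnion, Finset.mem_univ, true_and]
    exact ⟨y, Finset.mem_inter.mpr ⟨hR, hy⟩⟩
  have hS2 : ∀ y, (((K.erase A).erase A') ∩ Sy y).card + 2 = (Sy y).card := by
    intro y
    have e : ((K.erase A).erase A') ∩ Sy y = ((Sy y).erase A).erase A' := by
      ext R; simp only [Finset.mem_inter, Finset.mem_erase, hSy, Finset.mem_filter]; tauto
    have hA1 : A ∈ Sy y := by simp [hSy, hA, hρA]
    have hA2 : A' ∈ Sy y := by simp [hSy, hA', hρA']
    rw [e, Finset.card_erase_of_mem (by simp [hA2, hAA.symm]), Finset.card_erase_of_mem hA1]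
    have : 1 < (Sy y).card := Finset.one_lt_card.mpr ⟨A, hA1, A', hA2, hAA⟩
    omega
  have hS3 : ∑ y, (Sy y).card = ∑ y, (((K.erase A).erase A') ∩ Sy y).card + (Fintype.card F ^ 2 + Fintype.card F + 1) * 2 := by
    rw [← Finset.sum_congr rfl (fun y _ => hS2 y), Finset.sum_add_distrib, Finset.sum_const, Finset.card_univ,
      card_univ_three, smul_eq_mul]
  rw [hS3] at hsum
  generalize Fintype.card F = q at *
  nlinarith
end geompart2


section geompart3
open scoped Classical

theorem star_convert {X : Type*} [Fintype X] {q : ℕ} {ℓ : X → X → Finset X} {Pl : Finset (Finset X)}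
    (h : Space3 q ℓ Pl) (B : Finset X) (x : X) (hx : x ∈ Bᶜ)
    (hs : ∑ z ∈ B, (ℓ x z ∩ Bᶜ).card + q ≤ q * (Bᶜ).card) :
    B.card ≤ ∑ y ∈ (Bᶜ).erase x, ee ℓ Bᶜ x y := by
  have hxB : x ∉ B := by simpa using hx
  have h1 : ∀ y ∈ (Bᶜ).erase x, ee ℓ Bᶜ x y + (ℓ x y ∩ B).card = q := by
    intro y hy
    have hxy : x ≠ y := (Finset.ne_of_mem_erase hy).symm
    have h3 := Finset.card_inter_add_card_sdiff (ℓ x y) B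
    rw [h.card_line x y hxy] at h3
    have h2 : ℓ x y ∩ Bᶜ = ℓ x y \ B := by ext w; simp
    have h4 : x ∈ ℓ x y ∩ Bᶜ := by simp [hxB, h.left_mem x y hxy]
    have h5 := Finset.card_erase_add_one h4
    rw [ee]
    rw [h2] at h5 ⊢
    omega
  have h2 : ∑ y ∈ (Bᶜ).erase x, (ℓ x y ∩ B).card = ∑ z ∈ B, ((ℓ x z ∩ Bᶜ).erase x).card := by
    have e1 : ∀ y ∈ (Bᶜ).erase x, (ℓ x y ∩ B).card = ∑ z ∈ B, if z ∈ ℓ x y then 1 else 0 := by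
      intro y _
      rw [← Finset.card_filter, Finset.inter_comm, ← Finset.filter_mem_eq_inter]
    rw [Finset.sum_congr rfl e1, Finset.sum_comm]
    apply Finset.sum_congr rfl
    intro z hz
    rw [← Finset.card_filter]
    congr 1
    ext y
    have hxz : x ≠ z := by rintro rfl; exact hxB hz
    simp only [Finset.mem_filter, Finset.mem_erase, Finset.mem_inter]
    constructor
    · rintro ⟨⟨hyx, hyT⟩, hzl⟩
      refine ⟨hyx, ?_, hyT⟩
      rw [h.line_eq x y x z hyx.symm (h.left_mem _ _ hyx.symm) hzl hxz]
      exact h.right_mem _ _ hyx.symm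
    · rintro ⟨hyx, hyl, hyT⟩
      refine ⟨⟨hyx, hyT⟩, ?_⟩
      rw [h.line_eq x z x y hxz (h.left_mem _ _ hxz) hyl hyx.symm]
      exact h.right_mem _ _ hxz
  have h3 : ∑ z ∈ B, (ℓ x z ∩ Bᶜ).card = ∑ z ∈ B, ((ℓ x z ∩ Bᶜ).erase x).card + B.card := by
    have : ∀ z ∈ B, (ℓ x z ∩ Bᶜ).card = ((ℓ x z ∩ Bᶜ).erase x).card + 1 := by
      intro z hz
      have hxz : x ≠ z := by rintro rfl; exact hxB hz
      rw [Finset.card_erase_add_one]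
      simp [hxB, h.left_mem x z hxz]
    rw [Finset.sum_congr rfl this, Finset.sum_add_distrib]
    simp
  have s1 := Finset.sum_congr rfl h1
  rw [Finset.sum_add_distrib, h2, Finset.sum_const, smul_eq_mul] at s1
  have h5 := Finset.card_erase_add_one hx
  rw [h3] at hs
  rw [← h5] at hs
  nlinarith

variable {F : Type*} [Field F] [Fintype F]

/-- completeness -/
def Compl2 (K : Finset (Projectivization F (Fin 5 → F))) : Prop :=
  ∀ Q : Projectivization F (Fin 5 → F), Q ∉ K → ∃ A ∈ K, ∃ A' ∈ K, A ≠ A' ∧ Q.rep ∈ Submodule.span F {A.rep, A'.rep}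

theorem tanset_bound [CharP F 2] (K : Finset (Projectivization F (Fin 5 → F))) (hK : CapLI K) (hc : Compl2 K)
    (Q : Fin 5 → F) (hQ0 : Q ≠ 0) (hQ : ∀ R ∈ K, R.rep ∉ Submodule.span F {Q}) :
    (tanset K Q).card + K.card ≤ Fintype.card F ^ 3 + Fintype.card F ^ 2 + Fintype.card F + 2 := by
  have h1 : Projectivization.mk F Q hQ0 ∉ K := by
    intro h
    apply hQ _ h
    rw [mk_rep_mem]
    exact Submodule.mem_span_singleton_self _
  obtain ⟨A, hA, A', hA', hAA, hmem⟩ := hc _ h1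
  rw [mk_rep_mem, Submodule.mem_span_pair] at hmem
  obtain ⟨α, β, hαβ⟩ := hmem
  have hα : α ≠ 0 := by
    rintro rfl
    rw [zero_smul, zero_add] at hαβ
    have hβ : β ≠ 0 := by rintro rfl; exact hQ0 (by rw [← hαβ, zero_smul])
    apply hQ A' hA'
    rw [Submodule.mem_span_singleton, ← hαβ]
    exact ⟨β⁻¹, by rw [smul_smul, inv_mul_cancel₀ hβ, one_smul]⟩
  have hβ : β ≠ 0 := by
    rintro rfl
    rw [zero_smul, add_zero] at hαβ
    apply hQ A hA
    rw [Submodule.mem_span_singleton, ← hαβ]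
    exact ⟨α⁻¹, by rw [smul_smul, inv_mul_cancel₀ hα, one_smul]⟩
  exact sQ_le K hK A A' hA hA' hAA α β hβ Q hαβ.symm hα

theorem eq_of_rep_mem {n : ℕ} (x y : Projectivization F (Fin n → F)) (h : y.rep ∈ Submodule.span F {x.rep}) : y = x := by
  by_contra hne
  have hl := rep_li x y (Ne.symm hne)
  rw [LinearIndependent.pair_iff] at hl
  obtain ⟨c, hc⟩ := Submodule.mem_span_singleton.mp h
  have := hl c (-1) (by rw [hc]; module)
  simp at this

/-- projection data from a point -/
structure ProjData (P : Projectivization F (Fin 5 → F)) (π : (Fin 5 → F) →ₗ[F] (Fin 4 → F)) : Prop where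
  surj : Function.Surjective π
  zero : π P.rep = 0
  ker : ∀ x, π x = 0 → x ∈ Submodule.span F {P.rep}

theorem projData_exists (P : Projectivization F (Fin 5 → F)) : ∃ π, ProjData P π := by
  have hli : LinearIndependent F ![P.rep] := by
    rw [linearIndependent_unique_iff]
    exact P.rep_nonzero
  obtain ⟨g, ρ, h1, h2, h3⟩ := proj_exists (n := 4) ![P.rep] hli rfl
  refine ⟨ρ, h1, h2 0, ?_⟩
  intro x hx
  have := h3 x hx
  simp only [Fin.sum_univ_one, Matrix.cons_val_zero, Fin.isValue] at this
  rw [this]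
  exact Submodule.smul_mem _ _ (Submodule.mem_span_singleton_self _)

/-- the projected point -/
noncomputable def pr (π : (Fin 5 → F) →ₗ[F] (Fin 4 → F)) (R : Projectivization F (Fin 5 → F)) :
    Projectivization F (Fin 4 → F) :=
  if h : π R.rep ≠ 0 then Projectivization.mk F (π R.rep) h else Classical.arbitrary _

theorem ProjData.ne_zero {P : Projectivization F (Fin 5 → F)} {π : (Fin 5 → F) →ₗ[F] (Fin 4 → F)}
    (h : ProjData P π) (R) (hR : R ≠ P) : π R.rep ≠ 0 := fun h0 => hR (eq_of_rep_mem P R (h.ker _ h0))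

theorem ProjData.pr_mem {P : Projectivization F (Fin 5 → F)} {π : (Fin 5 → F) →ₗ[F] (Fin 4 → F)}
    (h : ProjData P π) (R) (hR : R ≠ P) (S : Submodule F (Fin 4 → F)) : (pr π R).rep ∈ S ↔ π R.rep ∈ S := by
  rw [pr, dif_pos (h.ne_zero R hR), mk_rep_mem]

theorem ProjData.rep_mem {P : Projectivization F (Fin 5 → F)} {π : (Fin 5 → F) →ₗ[F] (Fin 4 → F)}
    (h : ProjData P π) (R) (hR : R ≠ P) : π R.rep ∈ Submodule.span F {(pr π R).rep} :=
  (h.pr_mem R hR _).mp (Submodule.mem_span_singleton_self _)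

theorem ProjData.inj {P : Projectivization F (Fin 5 → F)} {π : (Fin 5 → F) →ₗ[F] (Fin 4 → F)}
    (h : ProjData P π) (K : Finset (Projectivization F (Fin 5 → F))) (hK : CapLI K) (hP : P ∈ K) :
    Set.InjOn (pr π) (K.erase P) := by
  intro R hR R' hR' heq
  rw [Finset.mem_coe, Finset.mem_erase] at hR hR'
  by_contra hne
  have h1 : π R.rep ∈ Submodule.span F {π R'.rep} := by
    rw [← h.pr_mem R hR.1, heq, h.pr_mem R' hR'.1]
    exact Submodule.mem_span_singleton_self _
  obtain ⟨c, hc⟩ := Submodule.mem_span_singleton.mp h1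
  have h2 : π (R.rep - c • R'.rep) = 0 := by rw [map_sub, map_smul, hc, sub_self]
  obtain ⟨d, hd⟩ := Submodule.mem_span_singleton.mp (h.ker _ h2)
  have hli := hK R hR.2 R' hR'.2 P hP hne hR.1 hR'.1
  rw [Fintype.linearIndependent_iff] at hli
  have := hli ![1, -c, -d] (by
    rw [Fin.sum_univ_three]
    simp only [Matrix.cons_val_zero, Matrix.cons_val_one, Matrix.cons_val]
    rw [neg_smul d, hd]; module) 0
  simp at this

/-- image of the cap -/
noncomputable def BB (K : Finset (Projectivization F (Fin 5 → F))) (P : Projectivization F (Fin 5 → F))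
    (π : (Fin 5 → F) →ₗ[F] (Fin 4 → F)) : Finset (Projectivization F (Fin 4 → F)) :=
  (K.erase P).image (pr π)

theorem BB_card {P : Projectivization F (Fin 5 → F)} {π : (Fin 5 → F) →ₗ[F] (Fin 4 → F)}
    (h : ProjData P π) (K : Finset (Projectivization F (Fin 5 → F))) (hK : CapLI K) (hP : P ∈ K) :
    (BB K P π).card + 1 = K.card := by
  rw [BB, Finset.card_image_of_injOn (h.inj K hK hP), Finset.card_erase_add_one hP]

theorem BBc_card {P : Projectivization F (Fin 5 → F)} {π : (Fin 5 → F) →ₗ[F] (Fin 4 → F)}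
    (h : ProjData P π) (K : Finset (Projectivization F (Fin 5 → F))) (hK : CapLI K) (hP : P ∈ K) :
    ((BB K P π)ᶜ).card + K.card = Fintype.card F ^ 3 + Fintype.card F ^ 2 + Fintype.card F + 2 := by
  have h1 := Finset.card_add_card_compl (BB K P π)
  rw [card_univ_four] at h1
  have h2 := BB_card h K hK hP
  omega

theorem star_raw [CharP F 2] {P : Projectivization F (Fin 5 → F)} {π : (Fin 5 → F) →ₗ[F] (Fin 4 → F)}
    (h : ProjData P π) (K : Finset (Projectivization F (Fin 5 → F))) (hK : CapLI K) (hP : P ∈ K) (hc : Compl2 K)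
    (x : Projectivization F (Fin 4 → F)) (hx : x ∈ (BB K P π)ᶜ) :
    ∑ z ∈ BB K P π, (lineF x z ∩ (BB K P π)ᶜ).card + Fintype.card F ≤ Fintype.card F * ((BB K P π)ᶜ).card := by
  have hxB : ∀ R ∈ K, R ≠ P → π R.rep ∉ Submodule.span F {x.rep} := by
    intro R hR hRP hmem
    rw [← h.pr_mem R hRP] at hmem
    have := eq_of_rep_mem x _ hmem
    rw [Finset.mem_compl] at hx
    apply hx
    rw [← this]
    exact Finset.mem_image_of_mem _ (Finset.mem_erase.mpr ⟨hRP, hR⟩)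
  have hxB' : ∀ R ∈ K, R ≠ P → x.rep ∉ Submodule.span F {π R.rep} := by
    intro R hR hRP hmem
    apply hxB R hR hRP
    obtain ⟨c, hc⟩ := Submodule.mem_span_singleton.mp hmem
    have hc0 : c ≠ 0 := by rintro rfl; exact x.rep_nonzero (by rw [← hc, zero_smul])
    rw [Submodule.mem_span_singleton, ← hc]
    exact ⟨c⁻¹, by rw [smul_smul, inv_mul_cancel₀ hc0, one_smul]⟩
  obtain ⟨v, hv⟩ := h.surj x.rep
  set Q : F → Fin 5 → F := fun l => v + l • P.rep with hQdef
  have hπQ : ∀ l, π (Q l) = x.rep := by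
    intro l; simp only [hQdef, map_add, map_smul, h.zero, smul_zero, add_zero, hv]
  have hQ0 : ∀ l, Q l ≠ 0 := by
    intro l h0
    have := hπQ l
    rw [h0, map_zero] at this
    exact x.rep_nonzero this.symm
  have hQK : ∀ l, ∀ R ∈ K, R.rep ∉ Submodule.span F {Q l} := by
    intro l R hR hmem
    obtain ⟨c, hc⟩ := Submodule.mem_span_singleton.mp hmem
    have h1 : π R.rep = c • x.rep := by rw [← hc, map_smul, hπQ]
    by_cases hRP : R = P
    · rw [hRP, h.zero] at h1
      have hc0 := (smul_eq_zero.mp h1.symm).resolve_right x.rep_nonzero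
      rw [hc0, zero_smul] at hc
      exact R.rep_nonzero hc.symm
    · apply hxB R hR hRP
      rw [h1]
      exact Submodule.smul_mem _ _ (Submodule.mem_span_singleton_self _)
  have hPt : ∀ l, P ∈ tanset K (Q l) := by
    intro l
    rw [tanset, Finset.mem_filter]
    refine ⟨hP, ?_⟩
    intro R' hR' hne hmem
    obtain ⟨a, b, hab⟩ := Submodule.mem_span_pair.mp hmem
    apply hxB R' hR' hne
    rw [← hab, map_add, map_smul, map_smul, hπQ, h.zero, smul_zero, add_zero]
    exact Submodule.smul_mem _ _ (Submodule.mem_span_singleton_self _)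
  -- per point bound
  have hper : ∀ R ∈ K.erase P, (lineF x (pr π R) ∩ (BB K P π)ᶜ).card ≤
      (Finset.univ.filter (fun l => R ∈ tanset K (Q l))).card := by
    intro R hR
    rw [Finset.mem_erase] at hR
    have hxR : x ≠ pr π R := by
      rintro heq
      rw [Finset.mem_compl] at hx
      apply hx
      rw [heq]
      exact Finset.mem_image_of_mem _ (Finset.mem_erase.mpr hR)
    set bad := Finset.univ.filter (fun l => R ∉ tanset K (Q l)) with hbad
    have hbadspec : ∀ l ∈ bad, ∃ R', R' ∈ K ∧ R' ≠ R ∧ R' ≠ P ∧ ∃ a b : F, a ≠ 0 ∧ R'.rep = a • Q l + b • R.rep := by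
      intro l hl
      simp only [hbad, Finset.mem_filter, Finset.mem_univ, true_and, tanset, not_and, not_forall] at hl
      obtain ⟨R', hR', hne, hmem⟩ := hl hR.2
      rw [not_not] at hmem
      obtain ⟨a, b, hab⟩ := Submodule.mem_span_pair.mp hmem
      have ha : a ≠ 0 := by
        rintro rfl
        apply hne
        apply eq_of_rep_mem
        rw [← hab, zero_smul, zero_add]
        exact Submodule.smul_mem _ _ (Submodule.mem_span_singleton_self _)
      refine ⟨R', hR', hne, ?_, a, b, ha, hab.symm⟩
      rintro rfl
      apply hxB' R hR.2 hR.1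
      have := congrArg π hab
      rw [h.zero, map_add, map_smul, map_smul, hπQ] at this
      rw [Submodule.mem_span_singleton]
      refine ⟨- (a⁻¹ * b), ?_⟩
      have e : x.rep = a⁻¹ • (a • x.rep) := by rw [smul_smul, inv_mul_cancel₀ ha, one_smul]
      rw [e, eq_neg_of_add_eq_zero_left this]
      module
    choose! r hrK hrR hrP ca cb hca hr using hbadspec
    have hπr : ∀ l ∈ bad, π (r l).rep = ca l • x.rep + cb l • π R.rep := by
      intro l hl
      conv_lhs => rw [hr l hl]
      rw [map_add, map_smul, map_smul, hπQ]
    have hb : bad.card ≤ ((lineF x (pr π R) ∩ BB K P π).erase (pr π R)).card := by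
      apply Finset.card_le_card_of_injOn (fun l => pr π (r l))
      · intro l hl
        have hl' : l ∈ bad := hl
        rw [Finset.mem_coe, Finset.mem_erase, Finset.mem_inter]
        refine ⟨?_, ?_, ?_⟩
        · intro heq
          exact hrR l hl (h.inj K hK hP (by simp [hrK l hl', hrP l hl']) (by simp [hR.1, hR.2]) heq)
        · rw [lineF, mem_pts, h.pr_mem _ (hrP l hl), hπr l hl]
          refine add_mem (Submodule.smul_mem _ _ (Submodule.subset_span (by simp))) (Submodule.smul_mem _ _ ?_)
          have := h.rep_mem R hR.1
          exact Submodule.span_mono (by simp) this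
        · exact Finset.mem_image_of_mem _ (Finset.mem_erase.mpr ⟨hrP l hl, hrK l hl⟩)
      · intro l hl m hm heq
        have hl' : l ∈ bad := hl
        have hm' : m ∈ bad := hm
        have hrr : r l = r m := h.inj K hK hP (by simp [hrK l hl', hrP l hl']) (by simp [hrK m hm', hrP m hm']) heq
        have e1 := hπr l hl
        have e2 := hπr m hm
        rw [hrr, e2] at e1
        have haa : ca l = ca m := by
          by_contra hne
          apply hxB' R hR.2 hR.1
          rw [Submodule.mem_span_singleton]
          have hsub : ca l - ca m ≠ 0 := sub_ne_zero.mpr hne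
          refine ⟨(ca l - ca m)⁻¹ * (cb m - cb l), ?_⟩
          have e : x.rep = (ca l - ca m)⁻¹ • ((ca l - ca m) • x.rep) := by rw [smul_smul, inv_mul_cancel₀ hsub, one_smul]
          have e3 : (ca l - ca m) • x.rep = (cb m - cb l) • π R.rep := by
            rw [sub_smul, sub_smul, sub_eq_sub_iff_add_eq_add, ← e1]; abel
          rw [e, e3, smul_smul]
        have hbb : cb l = cb m := by
          rw [haa] at e1
          have e3 := add_left_cancel e1
          have e4 : (cb m - cb l) • π R.rep = 0 := by rw [sub_smul, e3, sub_self]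
          have := (smul_eq_zero.mp e4).resolve_right (h.ne_zero R hR.1)
          exact (sub_eq_zero.mp this).symm
        have f1 := hr l hl
        have f2 := hr m hm
        rw [hrr, f2, haa, hbb] at f1
        have f3 := add_right_cancel f1
        simp only [hQdef, smul_add] at f3
        have f4 := add_left_cancel f3
        rw [smul_smul, smul_smul] at f4
        have f5 : (ca m * m - ca m * l) • P.rep = 0 := by rw [sub_smul, f4, sub_self]
        have f6 := (smul_eq_zero.mp f5).resolve_right P.rep_nonzero
        exact (mul_left_cancel₀ (hca m hm) (sub_eq_zero.mp f6)).symm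
    have hcc : (Finset.univ.filter (fun l => R ∈ tanset K (Q l))).card + bad.card = Fintype.card F := by
      rw [hbad, Finset.card_filter_add_card_filter_not, Finset.card_univ]
    have hmemB : pr π R ∈ lineF x (pr π R) ∩ BB K P π := by
      rw [Finset.mem_inter]
      exact ⟨space3F.right_mem _ _ hxR, Finset.mem_image_of_mem _ (Finset.mem_erase.mpr hR)⟩
    have h4 := Finset.card_erase_add_one hmemB
    have h5 := Finset.card_inter_add_card_sdiff (lineF x (pr π R)) (BB K P π)
    rw [space3F.card_line _ _ hxR] at h5
    have h6 : lineF x (pr π R) ∩ (BB K P π)ᶜ = lineF x (pr π R) \ BB K P π := by ext w; simp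
    rw [h6]
    omega
  have hS : ∑ z ∈ BB K P π, (lineF x z ∩ (BB K P π)ᶜ).card ≤
      ∑ R ∈ K.erase P, (Finset.univ.filter (fun l => R ∈ tanset K (Q l))).card := by
    conv_lhs => enter [1]; rw [BB]
    rw [Finset.sum_image (h.inj K hK hP)]
    exact Finset.sum_le_sum hper
  have hswap : ∑ R ∈ K.erase P, (Finset.univ.filter (fun l => R ∈ tanset K (Q l))).card =
      ∑ l : F, ((tanset K (Q l)).erase P).card := by
    simp only [Finset.card_filter]
    rw [Finset.sum_comm]
    apply Finset.sum_congr rfl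
    intro l _
    rw [← Finset.card_filter]
    congr 1
    ext R
    simp only [Finset.mem_filter, Finset.mem_erase]
    constructor
    · tauto
    · intro hR
      exact ⟨⟨hR.1, (Finset.mem_filter.mp hR.2).1⟩, hR.2⟩
  have hfin : ∑ l : F, (((tanset K (Q l)).erase P).card + 1) ≤ Fintype.card F * ((BB K P π)ᶜ).card := by
    have := Finset.sum_le_card_nsmul Finset.univ (fun l => ((tanset K (Q l)).erase P).card + 1) ((BB K P π)ᶜ).card (by
      intro l _
      rw [Finset.card_erase_add_one (hPt l)]
      have h1 := tanset_bound K hK hc (Q l) (hQ0 l) (hQK l)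
      have h2 := BBc_card h K hK hP
      omega)
    rwa [Finset.card_univ, smul_eq_mul] at this
  rw [Finset.sum_add_distrib] at hfin
  simp only [Finset.sum_const, smul_eq_mul, mul_one, Finset.card_univ] at hfin
  omega

theorem star_cond [CharP F 2] {P : Projectivization F (Fin 5 → F)} {π : (Fin 5 → F) →ₗ[F] (Fin 4 → F)}
    (h : ProjData P π) (K : Finset (Projectivization F (Fin 5 → F))) (hK : CapLI K) (hP : P ∈ K) (hc : Compl2 K)
    (x : Projectivization F (Fin 4 → F)) (hx : x ∈ (BB K P π)ᶜ) :
    Fintype.card F ^ 3 + Fintype.card F ^ 2 + Fintype.card F + 1 ≤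
      ((BB K P π)ᶜ).card + ∑ y ∈ ((BB K P π)ᶜ).erase x, ee lineF (BB K P π)ᶜ x y := by
  have h1 := star_convert space3F (BB K P π) x hx (star_raw h K hK hP hc x hx)
  have h2 := Finset.card_add_card_compl (BB K P π)
  rw [card_univ_four] at h2
  omega
end geompart3


section geompart4
open scoped Classical
variable {F : Type*} [Field F] [Fintype F]

noncomputable instance instFintypeDual5 : Fintype (Dual F (Fin 5 → F)) :=
  have : Finite (Dual F (Fin 5 → F)) := Module.finite_of_finite F
  Fintype.ofFinite _

theorem card_ann {m n : ℕ} (v : Fin m → Fin 5 → F) (hv : LinearIndependent F v) (hmn : m + n = 5) :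
    (Finset.univ.filter (fun φ : Dual F (Fin 5 → F) => ∀ i, φ (v i) = 0)).card = Fintype.card F ^ n := by
  have h1 := Subspace.finrank_add_finrank_dualAnnihilator_eq (Submodule.span F (Set.range v))
  rw [finrank_span_eq_card hv, finrank_fin_fun, Fintype.card_fin] at h1
  have h2 := Module.natCard_eq_pow_finrank (K := F) (V := (Submodule.span F (Set.range v)).dualAnnihilator)
  have h3 : finrank F (Submodule.span F (Set.range v)).dualAnnihilator = n := by omega
  rw [h3, Nat.card_eq_fintype_card (α := F)] at h2
  rw [← h2, ← Nat.card_eq_finsetCard]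
  apply Nat.card_congr
  apply Equiv.subtypeEquivRight
  intro φ
  simp only [Finset.mem_filter, Finset.mem_univ, true_and, Submodule.mem_dualAnnihilator]
  constructor
  · intro h w hw
    have : Submodule.span F (Set.range v) ≤ LinearMap.ker φ := by
      rw [Submodule.span_le]
      rintro _ ⟨i, rfl⟩
      exact h i
    exact this hw
  · intro h i
    exact h _ (Submodule.subset_span ⟨i, rfl⟩)

theorem card_ann1 (P : Projectivization F (Fin 5 → F)) :
    (Finset.univ.filter (fun φ : Dual F (Fin 5 → F) => φ P.rep = 0)).card = Fintype.card F ^ 4 := by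
  have hli : LinearIndependent F ![P.rep] := by
    rw [linearIndependent_unique_iff]
    exact P.rep_nonzero
  rw [← card_ann (n := 4) ![P.rep] hli rfl]
  simp

theorem card_ann2 (P Q : Projectivization F (Fin 5 → F)) (h : P ≠ Q) :
    (Finset.univ.filter (fun φ : Dual F (Fin 5 → F) => φ P.rep = 0 ∧ φ Q.rep = 0)).card = Fintype.card F ^ 3 := by
  rw [← card_ann (n := 3) ![P.rep, Q.rep] (rep_li P Q h) rfl]
  simp [Fin.forall_fin_two]

/-- number of points of K in a hyperplane -/
noncomputable def xx (K : Finset (Projectivization F (Fin 5 → F))) (φ : Dual F (Fin 5 → F)) : ℕ :=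
  (K.filter (fun P => φ P.rep = 0)).card

theorem sum_xx (K : Finset (Projectivization F (Fin 5 → F))) :
    ∑ φ, xx K φ = K.card * Fintype.card F ^ 4 := by
  simp only [xx, Finset.card_filter]
  rw [Finset.sum_comm]
  simp only [← Finset.card_filter, card_ann1]
  simp

theorem sum_xx_sq (K : Finset (Projectivization F (Fin 5 → F))) :
    ∑ φ, xx K φ ^ 2 + K.card * Fintype.card F ^ 3 = K.card * Fintype.card F ^ 4 + K.card ^ 2 * Fintype.card F ^ 3 := by
  have h1 : ∀ φ : Dual F (Fin 5 → F), xx K φ ^ 2 = ∑ P ∈ K, ∑ Q ∈ K, if φ P.rep = 0 ∧ φ Q.rep = 0 then 1 else 0 := by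
    intro φ
    rw [xx, Finset.card_filter, sq, Finset.sum_mul_sum]
    refine Finset.sum_congr rfl fun P _ => Finset.sum_congr rfl fun Q _ => ?_
    by_cases a : φ P.rep = 0 <;> by_cases b : φ Q.rep = 0 <;> simp [a, b]
  simp only [h1]
  rw [Finset.sum_comm]
  have h2 : ∀ P ∈ K, (∑ φ : Dual F (Fin 5 → F), ∑ Q ∈ K, if φ P.rep = 0 ∧ φ Q.rep = 0 then 1 else 0) + Fintype.card F ^ 3 =
      Fintype.card F ^ 4 + K.card * Fintype.card F ^ 3 := by
    intro P hP
    rw [Finset.sum_comm]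
    simp only [← Finset.card_filter]
    rw [← Finset.add_sum_erase K _ hP]
    have h3 : ∀ Q ∈ K.erase P, (Finset.univ.filter (fun φ : Dual F (Fin 5 → F) => φ P.rep = 0 ∧ φ Q.rep = 0)).card = Fintype.card F ^ 3 :=
      fun Q hQ => card_ann2 P Q (Finset.ne_of_mem_erase hQ).symm
    rw [Finset.sum_congr rfl h3]
    simp only [and_self, card_ann1, Finset.sum_const, smul_eq_mul]
    rw [← Finset.card_erase_add_one hP]
    ring
  have h3 := Finset.sum_congr rfl h2
  rw [Finset.sum_add_distrib] at h3
  simp only [Finset.sum_const, smul_eq_mul] at h3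
  rw [h3]; ring

theorem card_dual5 : Fintype.card (Dual F (Fin 5 → F)) = Fintype.card F ^ 5 := by
  rw [← Nat.card_eq_fintype_card, ← Nat.card_eq_fintype_card (α := F), Module.natCard_eq_pow_finrank (K := F)]
  simp

theorem sum_var (K : Finset (Projectivization F (Fin 5 → F))) (q : ℝ) (hq : (Fintype.card F : ℝ) = q) :
    ∑ φ, (q * (xx K φ : ℝ) - K.card) ^ 2 = K.card * q ^ 5 * (q - 1) := by
  have h1 : (∑ φ, (xx K φ : ℝ)) = K.card * q ^ 4 := by
    rw [← hq]; exact_mod_cast sum_xx K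
  have h2 : (∑ φ, (xx K φ : ℝ) ^ 2) + K.card * q ^ 3 = K.card * q ^ 4 + K.card ^ 2 * q ^ 3 := by
    rw [← hq]; exact_mod_cast sum_xx_sq K
  have h3 : ∀ φ, (q * (xx K φ : ℝ) - K.card) ^ 2 = q ^ 2 * (xx K φ : ℝ) ^ 2 - 2 * q * K.card * xx K φ + (K.card : ℝ) ^ 2 := by
    intro φ; ring
  simp only [h3]
  rw [Finset.sum_add_distrib, Finset.sum_sub_distrib, ← Finset.mul_sum, ← Finset.mul_sum, h1]
  have h4 : (∑ φ, (xx K φ : ℝ) ^ 2) = K.card * q ^ 4 + K.card ^ 2 * q ^ 3 - K.card * q ^ 3 := by linarith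
  rw [h4]
  simp only [Finset.sum_const, Finset.card_univ, card_dual5, nsmul_eq_mul]
  push_cast
  rw [hq]
  ring

theorem xx_smul (K : Finset (Projectivization F (Fin 5 → F))) (φ : Dual F (Fin 5 → F)) (c : Fˣ) :
    xx K (c • φ) = xx K φ := by
  simp [xx, Units.smul_def]

/-- nonzero multiples -/
noncomputable def mults (φ : Dual F (Fin 5 → F)) : Finset (Dual F (Fin 5 → F)) :=
  Finset.univ.image (fun c : Fˣ => c • φ)

theorem mults_card (φ : Dual F (Fin 5 → F)) (h : φ ≠ 0) : (mults φ).card = Fintype.card F - 1 := by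
  rw [mults, Finset.card_image_of_injective, Finset.card_univ, Fintype.card_units]
  intro c d hcd
  apply Units.ext
  simp only [Units.smul_def] at hcd
  exact smul_left_injective F h hcd

theorem sum_mults (K : Finset (Projectivization F (Fin 5 → F))) (φ : Dual F (Fin 5 → F)) (h : φ ≠ 0)
    (q : ℝ) (hq : (Fintype.card F : ℝ) = q) :
    ∑ φ' ∈ mults φ, 1 / (xx K φ' : ℝ) = (q - 1) / xx K φ := by
  have : ∀ φ' ∈ mults φ, 1 / (xx K φ' : ℝ) = 1 / xx K φ := by
    intro φ' hφ'
    rw [mults, Finset.mem_image] at hφ'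
    obtain ⟨c, _, rfl⟩ := hφ'
    rw [xx_smul]
  rw [Finset.sum_congr rfl this, Finset.sum_const, mults_card φ h, nsmul_eq_mul,
    Nat.cast_sub Fintype.card_pos, hq]
  simp [div_eq_mul_inv]

theorem step5 (K : Finset (Projectivization F (Fin 5 → F))) (q : ℕ) (hcq : Fintype.card F = q) (hq : 2048 ≤ q)
    (hk : (q : ℝ) ^ 3 - 2 * (q : ℝ) ^ 2 ≤ K.card)
    (h : ∀ P ∈ K, (∃ φ : Dual F (Fin 5 → F), φ ≠ 0 ∧ φ P.rep = 0 ∧ 5 * xx K φ ≤ 3 * q + 5) ∨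
      (∃ φ φ' : Dual F (Fin 5 → F), φ ≠ 0 ∧ φ' ≠ 0 ∧ (∀ c : Fˣ, φ' ≠ c • φ) ∧ φ P.rep = 0 ∧ φ' P.rep = 0 ∧
        5 * xx K φ ≤ 8 * q + 5 ∧ 5 * xx K φ' ≤ 8 * q + 5)) : False := by
  have hQ : (Fintype.card F : ℝ) = (q : ℝ) := by rw [hcq]
  have hq' : (2048 : ℝ) ≤ q := by exact_mod_cast hq
  set Sm := Finset.univ.filter (fun φ : Dual F (Fin 5 → F) => 5 * xx K φ ≤ 8 * q + 5) with hSm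
  have hpos : ∀ P ∈ K, ∀ φ : Dual F (Fin 5 → F), φ P.rep = 0 → (1 : ℝ) ≤ xx K φ := by
    intro P hP φ hφ
    have : 0 < xx K φ := Finset.card_pos.mpr ⟨P, by simp [hP, hφ]⟩
    exact_mod_cast this
  have hsub : ∀ (P : Projectivization F (Fin 5 → F)) (φ : Dual F (Fin 5 → F)), φ P.rep = 0 → 5 * xx K φ ≤ 8 * q + 5 →
      mults φ ⊆ Sm.filter (fun φ => φ P.rep = 0) := by
    intro P φ h0 h1 φ' hφ'
    rw [mults, Finset.mem_image] at hφ'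
    obtain ⟨c, _, rfl⟩ := hφ'
    rw [Finset.mem_filter, hSm, Finset.mem_filter, xx_smul]
    exact ⟨⟨Finset.mem_univ _, h1⟩, by simp [h0, Units.smul_def]⟩
  have hP : ∀ P ∈ K, 6 / 5 * ((q : ℝ) - 1) / q ≤ ∑ φ ∈ Sm.filter (fun φ => φ P.rep = 0), 1 / (xx K φ : ℝ) := by
    intro P hPK
    rcases h P hPK with ⟨φ, h0, hφ, hx⟩ | ⟨φ, φ', h0, h0', hne, hφ, hφ', hx, hx'⟩
    · have h1 := Finset.sum_le_sum_of_subset_of_nonneg (f := fun φ => 1 / (xx K φ : ℝ)) (hsub P φ hφ (by omega))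
        (fun i _ _ => by positivity)
      rw [sum_mults K φ h0 q hQ] at h1
      refine le_trans ?_ h1
      have h2 := hpos P hPK φ hφ
      have h3 : 5 * (xx K φ : ℝ) ≤ 3 * q + 5 := by exact_mod_cast hx
      rw [div_le_div_iff₀ (by linarith) (by linarith)]
      nlinarith
    · have hd : Disjoint (mults φ) (mults φ') := by
        rw [Finset.disjoint_left]
        intro χ h1 h2
        rw [mults, Finset.mem_image] at h1 h2
        obtain ⟨c, _, rfl⟩ := h1
        obtain ⟨d, _, hd⟩ := h2
        apply hne (d⁻¹ * c)
        rw [mul_smul, ← hd, inv_smul_smul]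
      have h1 := Finset.sum_le_sum_of_subset_of_nonneg (f := fun φ => 1 / (xx K φ : ℝ))
        (Finset.union_subset (hsub P φ hφ (by omega)) (hsub P φ' hφ' (by omega)))
        (fun i _ _ => by positivity)
      rw [Finset.sum_union hd, sum_mults K φ h0 q hQ, sum_mults K φ' h0' q hQ] at h1
      refine le_trans ?_ h1
      have key : ∀ φ : Dual F (Fin 5 → F), φ P.rep = 0 → 5 * xx K φ ≤ 8 * q + 5 →
          3 / 5 * ((q : ℝ) - 1) / q ≤ (q - 1) / xx K φ := by
        intro φ hφ hx
        have h2 := hpos P hPK φ hφ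
        have h3 : 5 * (xx K φ : ℝ) ≤ 8 * q + 5 := by exact_mod_cast hx
        rw [div_le_div_iff₀ (by linarith) (by linarith)]
        nlinarith
      have e : 6 / 5 * ((q : ℝ) - 1) / q = 3 / 5 * ((q : ℝ) - 1) / q + 3 / 5 * ((q : ℝ) - 1) / q := by ring
      rw [e]
      exact add_le_add (key φ hφ hx) (key φ' hφ' hx')
  have hM : (K.card : ℝ) * (6 / 5 * ((q : ℝ) - 1) / q) ≤ Sm.card := by
    have h1 := Finset.sum_le_sum hP
    rw [Finset.sum_const, nsmul_eq_mul] at h1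
    refine h1.trans ?_
    simp only [Finset.sum_filter]
    rw [Finset.sum_comm]
    have h2 : ∀ φ ∈ Sm, (∑ P ∈ K, if φ P.rep = 0 then 1 / (xx K φ : ℝ) else 0) ≤ 1 := by
      intro φ _
      rw [← Finset.sum_filter, Finset.sum_const, nsmul_eq_mul]
      change (xx K φ : ℝ) * _ ≤ 1
      rw [mul_one_div]
      exact div_self_le_one _
    have := Finset.sum_le_sum h2
    simpa using this
  have hk2 : (q : ℝ) ^ 3 * (99 / 100) ≤ K.card - (8 / 5 * (q : ℝ) ^ 2 + q) := by
    nlinarith [sq_nonneg (q : ℝ)]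
  have hV : (Sm.card : ℝ) * ((q : ℝ) ^ 3 * (99 / 100)) ^ 2 ≤ K.card * (q : ℝ) ^ 5 * (q - 1) := by
    rw [← sum_var K q hQ]
    refine le_trans ?_ (Finset.sum_le_sum_of_subset_of_nonneg (Finset.subset_univ Sm) (fun i _ _ => sq_nonneg _))
    rw [← nsmul_eq_mul]
    apply Finset.card_nsmul_le_sum
    intro φ hφ
    have h1 : 5 * xx K φ ≤ 8 * q + 5 := by simpa [hSm] using hφ
    have h3 : 5 * (xx K φ : ℝ) ≤ 8 * q + 5 := by exact_mod_cast h1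
    rw [← neg_sq ((q : ℝ) * xx K φ - K.card)]
    apply pow_le_pow_left₀ (by positivity)
    nlinarith
  have hkpos : (0 : ℝ) < K.card := by
    have : (0 : ℝ) < (q : ℝ) ^ 3 * (99 / 100) := by positivity
    nlinarith
  have h5 : (K.card : ℝ) * (6 / 5 * ((q : ℝ) - 1) / q) * ((q : ℝ) ^ 3 * (99 / 100)) ^ 2 ≤ K.card * (q : ℝ) ^ 5 * (q - 1) :=
    (mul_le_mul_of_nonneg_right hM (by positivity)).trans hV
  have e : (K.card : ℝ) * (6 / 5 * ((q : ℝ) - 1) / q) * ((q : ℝ) ^ 3 * (99 / 100)) ^ 2 =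
      (6 / 5 * (99 / 100) ^ 2) * (K.card * (q : ℝ) ^ 5 * (q - 1)) := by
    have : (q : ℝ) ≠ 0 := by linarith
    field_simp
  rw [e] at h5
  have : 0 < (K.card : ℝ) * (q : ℝ) ^ 5 * (q - 1) := by
    have : (0 : ℝ) < q - 1 := by linarith
    positivity
  nlinarith

theorem xx_comp {P : Projectivization F (Fin 5 → F)} {π : (Fin 5 → F) →ₗ[F] (Fin 4 → F)}
    (h : ProjData P π) (K : Finset (Projectivization F (Fin 5 → F))) (hK : CapLI K) (hP : P ∈ K)
    (ψ : Dual F (Fin 4 → F)) :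
    xx K (ψ.comp π) = (pts (LinearMap.ker ψ) ∩ BB K P π).card + 1 := by
  have h1 : K.filter (fun R => (ψ.comp π) R.rep = 0) = insert P ((K.erase P).filter (fun R => (ψ.comp π) R.rep = 0)) := by
    ext R
    simp only [Finset.mem_filter, Finset.mem_insert, Finset.mem_erase]
    constructor
    · intro hR
      by_cases hRP : R = P
      · exact Or.inl hRP
      · exact Or.inr ⟨⟨hRP, hR.1⟩, hR.2⟩
    · rintro (rfl | hR)
      · refine ⟨hP, ?_⟩
        simp [h.zero]
      · exact ⟨hR.1.2, hR.2⟩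
  have h2 : pts (LinearMap.ker ψ) ∩ BB K P π = ((K.erase P).filter (fun R => (ψ.comp π) R.rep = 0)).image (pr π) := by
    ext y
    simp only [Finset.mem_inter, BB, Finset.mem_image, Finset.mem_filter, mem_pts]
    constructor
    · rintro ⟨h3, R, hR, rfl⟩
      rw [h.pr_mem R (Finset.ne_of_mem_erase hR)] at h3
      exact ⟨R, ⟨hR, h3⟩, rfl⟩
    · rintro ⟨R, ⟨hR, h3⟩, rfl⟩
      refine ⟨?_, R, hR, rfl⟩
      rw [h.pr_mem R (Finset.ne_of_mem_erase hR)]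
      exact h3
  rw [xx, h1, Finset.card_insert_of_notMem (by simp), h2, Finset.card_image_of_injOn]
  intro R hR R' hR' he
  exact h.inj K hK hP (Finset.mem_coe.mpr (Finset.mem_filter.mp hR).1) (Finset.mem_coe.mpr (Finset.mem_filter.mp hR').1) he

theorem plane_functional (S : Submodule F (Fin 4 → F)) (hS : finrank F S = 3) :
    ∃ ψ : Dual F (Fin 4 → F), ψ ≠ 0 ∧ LinearMap.ker ψ = S := by
  have hlt : S < ⊤ := by
    rw [lt_top_iff_ne_top]
    rintro rfl
    simp at hS
  obtain ⟨ψ, h0, hle⟩ := Submodule.exists_le_ker_of_lt_top S hlt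
  refine ⟨ψ, h0, ?_⟩
  symm
  apply Submodule.eq_of_le_of_finrank_le hle
  have h1 := Module.Dual.finrank_ker_add_one_of_ne_zero h0
  rw [finrank_fin_fun] at h1
  omega

theorem planes_convert {P : Projectivization F (Fin 5 → F)} {π : (Fin 5 → F) →ₗ[F] (Fin 4 → F)}
    (h : ProjData P π) (K : Finset (Projectivization F (Fin 5 → F))) (hK : CapLI K) (hP : P ∈ K)
    (H : Finset (Projectivization F (Fin 4 → F))) (hH : H ∈ planesF F) :
    ∃ ψ : Dual F (Fin 4 → F), ψ ≠ 0 ∧ H = pts (LinearMap.ker ψ) ∧ ψ.comp π ≠ 0 ∧ (ψ.comp π) P.rep = 0 ∧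
      xx K (ψ.comp π) = (H \ (BB K P π)ᶜ).card + 1 := by
  obtain ⟨S, hS, rfl⟩ := (mem_planesF H).mp hH
  obtain ⟨ψ, h0, rfl⟩ := plane_functional S hS
  refine ⟨ψ, h0, rfl, ?_, by simp [h.zero], ?_⟩
  · intro hz
    apply h0
    apply LinearMap.ext
    intro v
    obtain ⟨u, rfl⟩ := h.surj v
    exact LinearMap.congr_fun hz u
  · rw [xx_comp h K hK hP]
    congr 2
    ext x
    simp

theorem step5_final [CharP F 2] (K : Finset (Projectivization F (Fin 5 → F))) (hK : CapLI K) (hc : Compl2 K)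
    (q : ℕ) (hcq : Fintype.card F = q) (hq : 2048 ≤ q)
    (hk : (q : ℝ) ^ 3 - 2 * (q : ℝ) ^ 2 ≤ K.card) (hk1 : q ^ 3 + q ^ 2 + q + 2 + 100 * q ≤ 3 * q ^ 2 + K.card)
    (hk2 : K.card ≠ q ^ 3 + q ^ 2 + q + 2) : False := by
  subst hcq
  apply step5 K _ rfl hq hk
  intro P hP
  obtain ⟨π, h⟩ := projData_exists P
  have hcard := BBc_card h K hK hP
  have hne : ((BB K P π)ᶜ).Nonempty := by
    rw [← Finset.card_pos]
    omega
  rcases structure_lemma space3F hq ((BB K P π)ᶜ) hne (by omega) (star_cond h K hK hP hc) with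
    ⟨H, hH, hx⟩ | ⟨H, hH, H', hH', hHH, hx, hx'⟩
  · obtain ⟨ψ, h0, h1, h2, h3, h4⟩ := planes_convert h K hK hP H hH
    exact Or.inl ⟨_, h2, h3, by omega⟩
  · obtain ⟨ψ, h0, h1, h2, h3, h4⟩ := planes_convert h K hK hP H hH
    obtain ⟨ψ', h0', h1', h2', h3', h4'⟩ := planes_convert h K hK hP H' hH'
    refine Or.inr ⟨_, _, h2, h2', ?_, h3, h3', by omega, by omega⟩
    intro c hcc
    apply hHH
    rw [h1, h1']
    congr 1
    ext v
    obtain ⟨u, rfl⟩ := h.surj v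
    have := LinearMap.congr_fun hcc u
    simp only [LinearMap.comp_apply, LinearMap.smul_apply, Units.smul_def] at this
    rw [LinearMap.mem_ker, LinearMap.mem_ker, this]
    simp

end geompart4


section geompart5
open scoped Classical
variable {F : Type*} [Field F] [Fintype F]

theorem xx_dichotomy (K : Finset (Projectivization F (Fin 5 → F))) (hK : CapLI K)
    (q : ℕ) (hcq : Fintype.card F = q) (hk : K.card = q ^ 3 + q ^ 2 + q + 2)
    (φ : Dual F (Fin 5 → F)) (h0 : φ ≠ 0) : xx K φ = 0 ∨ xx K φ = q ^ 2 + q + 2 := by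
  subst hcq
  by_cases hx : xx K φ = 0
  · exact Or.inl hx
  right
  obtain ⟨P, hPm⟩ := Finset.card_pos.mp (Nat.pos_of_ne_zero hx)
  rw [Finset.mem_filter] at hPm
  obtain ⟨hP, hφ⟩ := hPm
  obtain ⟨π, h⟩ := projData_exists P
  have hcard := BBc_card h K hK hP
  have hB : BB K P π = Finset.univ := by
    have : (BB K P π)ᶜ = ∅ := by rw [← Finset.card_eq_zero]; omega
    simpa using this
  obtain ⟨s, hs⟩ := LinearMap.exists_rightInverse_of_surjective π (LinearMap.range_eq_top.mpr h.surj)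
  have hcomp : φ = (φ.comp s).comp π := by
    apply LinearMap.ext
    intro u
    have h1 : π (u - s (π u)) = 0 := by
      have := LinearMap.congr_fun hs (π u)
      simp only [LinearMap.comp_apply, LinearMap.id_apply] at this
      rw [map_sub, this, sub_self]
    obtain ⟨c, hc⟩ := Submodule.mem_span_singleton.mp (h.ker _ h1)
    have h2 : φ (u - s (π u)) = 0 := by rw [← hc, map_smul, hφ, smul_zero]
    rw [map_sub] at h2
    exact sub_eq_zero.mp h2
  have hne : φ.comp s ≠ 0 := by
    intro hz
    rw [hz] at hcomp
    apply h0
    rw [hcomp, LinearMap.zero_comp]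
  have hr := Module.Dual.finrank_ker_add_one_of_ne_zero hne
  rw [finrank_fin_fun] at hr
  rw [hcomp, xx_comp h K hK hP, hB, Finset.inter_univ, card_pts_three _ (by omega)]

theorem step6 (K : Finset (Projectivization F (Fin 5 → F))) (hK : CapLI K)
    (q : ℕ) (hcq : Fintype.card F = q) (hq : 2048 ≤ q) (hk : K.card = q ^ 3 + q ^ 2 + q + 2) : False := by
  have hd := xx_dichotomy K hK q hcq hk
  have hex : ∃ φ : Dual F (Fin 5 → F), φ ≠ 0 ∧ xx K φ = 0 := by
    by_contra hno
    push Not at hno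
    have h1 := sum_xx K
    rw [← Finset.add_sum_erase Finset.univ _ (Finset.mem_univ (0 : Dual F (Fin 5 → F)))] at h1
    have h2 : ∀ φ ∈ Finset.univ.erase (0 : Dual F (Fin 5 → F)), xx K φ = q ^ 2 + q + 2 := by
      intro φ hφ
      have h0 := Finset.ne_of_mem_erase hφ
      exact (hd φ h0).resolve_left (hno φ h0)
    rw [Finset.sum_congr rfl h2, Finset.sum_const, smul_eq_mul] at h1
    have h3 := Finset.card_erase_add_one (Finset.mem_univ (0 : Dual F (Fin 5 → F)))
    rw [Finset.card_univ, card_dual5, hcq] at h3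
    have h4 : xx K (0 : Dual F (Fin 5 → F)) = K.card := by simp [xx]
    rw [h4, hk, hcq] at h1
    set N := (Finset.univ.erase (0 : Dual F (Fin 5 → F))).card
    have h5 : (q ^ 3 + q ^ 2 + q + 2) + (N + 1) * (q ^ 2 + q + 2) = (q ^ 3 + q ^ 2 + q + 2) * q ^ 4 + (q ^ 2 + q + 2) := by
      linarith
    rw [h3] at h5
    have h6 : 2 * q ^ 4 < q ^ 5 := by
      have : 0 < q ^ 4 := by positivity
      calc 2 * q ^ 4 < q * q ^ 4 := by apply Nat.mul_lt_mul_of_pos_right (by omega) this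
        _ = q ^ 5 := by ring
    have h7 : q ^ 3 > 0 := by positivity
    nlinarith
  obtain ⟨φ, h0, hx⟩ := hex
  have hφ : ∀ P ∈ K, φ P.rep ≠ 0 := by
    intro P hP hz
    rw [xx, Finset.card_eq_zero] at hx
    have : P ∈ K.filter (fun P => φ P.rep = 0) := by simp [hP, hz]
    rw [hx] at this
    simp at this
  have hψ : ∃ ψ : Dual F (Fin 5 → F), ∀ c : F, ψ + c • φ ≠ 0 := by
    by_contra hno
    push Not at hno
    have hs : Function.Surjective (fun c : F => -(c • φ)) := by
      intro ψ
      obtain ⟨c, hc⟩ := hno ψ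
      exact ⟨c, (eq_neg_of_add_eq_zero_left hc).symm⟩
    have := Fintype.card_le_of_surjective _ hs
    rw [card_dual5, hcq] at this
    have h1 : q ^ 1 < q ^ 5 := Nat.pow_lt_pow_right (by omega) (by norm_num)
    rw [pow_one] at h1
    omega
  obtain ⟨ψ, hψ⟩ := hψ
  have hsum : ∑ c : F, xx K (ψ + c • φ) = K.card := by
    simp only [xx, Finset.card_filter]
    rw [Finset.sum_comm, Finset.card_eq_sum_ones]
    apply Finset.sum_congr rfl
    intro P hP
    rw [← Finset.card_filter, Finset.card_eq_one]
    refine ⟨-(ψ P.rep) / φ P.rep, ?_⟩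
    ext c
    simp only [Finset.mem_filter, Finset.mem_univ, true_and, Finset.mem_singleton, LinearMap.add_apply,
      LinearMap.smul_apply, smul_eq_mul]
    rw [eq_div_iff (hφ P hP)]
    constructor
    · intro h; linear_combination h
    · intro h; linear_combination h
  have hdvd : q ^ 2 + q + 2 ∣ K.card := by
    rw [← hsum]
    apply Finset.dvd_sum
    intro c _
    rcases hd _ (hψ c) with h | h <;> rw [h]
    exact dvd_zero _
  obtain ⟨m, hm⟩ := hdvd
  rw [hk] at hm
  rcases lt_or_ge m q with h | h
  · have : (q ^ 2 + q + 2) * m ≤ (q ^ 2 + q + 2) * (q - 1) := Nat.mul_le_mul_left _ (by omega)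
    obtain ⟨r, rfl⟩ : ∃ r, q = r + 1 := ⟨q - 1, by omega⟩
    simp only [Nat.add_sub_cancel] at this
    nlinarith
  · have : (q ^ 2 + q + 2) * q ≤ (q ^ 2 + q + 2) * m := Nat.mul_le_mul_left _ h
    nlinarith

theorem li_of_not_coll {n : ℕ} (P Q R : Projectivization F (Fin n → F))
    (h : ¬ finrank F ↥(P.submodule ⊔ Q.submodule ⊔ R.submodule) ≤ 2) :
    LinearIndependent F ![P.rep, Q.rep, R.rep] := by
  rw [linearIndependent_iff_card_le_finrank_span]
  rw [Projectivization.submodule_eq, Projectivization.submodule_eq, Projectivization.submodule_eq,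
    ← Submodule.span_union, ← Submodule.span_union] at h
  have e : Set.range ![P.rep, Q.rep, R.rep] = {P.rep} ∪ {Q.rep} ∪ {R.rep} := by
    ext x; simp
  rw [Set.finrank, e, Fintype.card_fin]
  omega

theorem coll_of_not_li {n : ℕ} (P Q R : Projectivization F (Fin n → F)) (hQR : Q ≠ R)
    (h : finrank F ↥(P.submodule ⊔ Q.submodule ⊔ R.submodule) ≤ 2) :
    P.rep ∈ Submodule.span F {Q.rep, R.rep} := by
  have h1 : Submodule.span F {Q.rep, R.rep} ≤ P.submodule ⊔ Q.submodule ⊔ R.submodule := by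
    rw [Submodule.span_le]
    rintro x (rfl | rfl)
    · exact (le_sup_right.trans le_sup_left : Q.submodule ≤ P.submodule ⊔ Q.submodule ⊔ R.submodule)
        (by rw [Projectivization.submodule_eq]; exact Submodule.mem_span_singleton_self _)
    · exact (le_sup_right : R.submodule ≤ P.submodule ⊔ Q.submodule ⊔ R.submodule)
        (by rw [Projectivization.submodule_eq]; exact Submodule.mem_span_singleton_self _)
  have h2 := Submodule.eq_of_le_of_finrank_le h1 (by rw [finrank_line Q R hQR]; exact h)
  rw [h2]
  exact (le_sup_left.trans le_sup_left : P.submodule ≤ P.submodule ⊔ Q.submodule ⊔ R.submodule)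
        (by rw [Projectivization.submodule_eq]; exact Submodule.mem_span_singleton_self _)

theorem cap_main [CharP F 2] (K : Finset (Projectivization F (Fin 5 → F))) (hK : CapLI K) (hc : Compl2 K)
    (q : ℕ) (hcq : Fintype.card F = q) (hq : 2048 ≤ q) :
    (K.card : ℝ) < (q : ℝ) ^ 3 - 2 * (q : ℝ) ^ 2 + 3 * (q : ℝ) * Real.sqrt q + 8 * (q : ℝ) - 9 * Real.sqrt q - 6 := by
  by_contra hcon
  push Not at hcon
  have hq' : (2048 : ℝ) ≤ q := by exact_mod_cast hq
  have hs : (45 : ℝ) ≤ Real.sqrt q := Real.le_sqrt_of_sq_le (by linarith)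
  have hb : (q : ℝ) ^ 3 - 2 * (q : ℝ) ^ 2 + 135 * q - 405 + 8 * q - 6 ≤ K.card := by
    nlinarith [mul_nonneg (sub_nonneg.mpr hs) (by linarith : (0 : ℝ) ≤ 3 * q - 9)]
  have h1 : q ^ 3 + q ^ 2 + q + 2 + 100 * q ≤ 3 * q ^ 2 + K.card := by
    have : (q : ℝ) ^ 3 + q ^ 2 + q + 2 + 100 * q ≤ 3 * q ^ 2 + K.card := by nlinarith
    exact_mod_cast this
  by_cases hk : K.card = q ^ 3 + q ^ 2 + q + 2
  · exact step6 K hK q hcq hq hk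
  · exact step5_final K hK hc q hcq hq (by nlinarith) h1 hk

end geompart5


theorem exists_maxcap {F : Type*} [Field F] [Fintype F] (K : Set (PGPoint F 4)) (hK : IsCap K) :
    ∃ K' : Set (PGPoint F 4), K ⊆ K' ∧ IsCap K' ∧ ∀ Q ∉ K', ¬ IsCap (insert Q K') := by
  obtain ⟨K', hle, hmax⟩ := Finite.exists_le_maximal (p := fun K : Set (PGPoint F 4) => IsCap K) hK
  refine ⟨K', hle, hmax.prop, ?_⟩
  intro Q hQ hcap
  exact hQ (hmax.le_of_ge hcap (Set.subset_insert _ _) (Set.mem_insert _ _))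

theorem compl_of_max {F : Type*} [Field F] [Fintype F] (K : Set (PGPoint F 4)) (hK : IsCap K)
    (hmax : ∀ Q ∉ K, ¬ IsCap (insert Q K)) (Q : PGPoint F 4) (hQ : Q ∉ K) :
    ∃ A ∈ K, ∃ A' ∈ K, A ≠ A' ∧ Q.rep ∈ Submodule.span F {A.rep, A'.rep} := by
  have h := hmax Q hQ
  unfold IsCap at h
  push Not at h
  obtain ⟨P₁, h1, P₂, h2, P₃, h3, n12, n13, n23, hc⟩ := h
  rcases h1 with rfl | h1
  · have h2' := h2.resolve_left n12.symm
    have h3' := h3.resolve_left n13.symm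
    exact ⟨P₂, h2', P₃, h3', n23, coll_of_not_li _ _ _ n23 hc⟩
  rcases h2 with rfl | h2
  · have h3' := h3.resolve_left n23.symm
    refine ⟨P₁, h1, P₃, h3', n13, coll_of_not_li _ _ _ n13 ?_⟩
    rw [sup_comm P₂.submodule]
    exact hc
  rcases h3 with rfl | h3
  · refine ⟨P₁, h1, P₂, h2, n12, coll_of_not_li _ _ _ n12 ?_⟩
    rw [sup_assoc, sup_comm]
    exact hc
  · exact absurd hc (hK P₁ h1 P₂ h2 P₃ h3 n12 n13 n23)

theorem stmt0 (F : Type*) [Field F] [Fintype F] (q : ℕ) (hcard : Fintype.card F = q)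
    (hqeven : Even q) (hq : 2048 ≤ q)
    (K : Set (PGPoint F 4)) (hK : IsCap K) :
    (K.ncard : ℝ) < (q : ℝ) ^ 3 - 2 * (q : ℝ) ^ 2 + 3 * (q : ℝ) * Real.sqrt q + 8 * (q : ℝ) - 9 * Real.sqrt q - 6 := by
  obtain ⟨K', hle, hcap, hmax⟩ := exists_maxcap K hK
  have hchar : CharP F 2 := by
    obtain ⟨p, hp⟩ := CharP.exists F
    have hpp : p.Prime := (CharP.char_is_prime_or_zero F p).resolve_right (CharP.char_ne_zero_of_finite F p)
    have : Fact p.Prime := ⟨hpp⟩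
    obtain ⟨n, _, hn⟩ := FiniteField.card F p
    have h2 : 2 ∣ p ^ (n : ℕ) := by rw [← hn, hcard]; exact hqeven.two_dvd
    have h3 := (Nat.prime_dvd_prime_iff_eq Nat.prime_two hpp).mp (Nat.prime_two.dvd_of_dvd_pow h2)
    rw [h3]
    exact hp
  have hfin : K'.Finite := Set.toFinite K'
  have hmem : ∀ P, P ∈ hfin.toFinset ↔ P ∈ K' := fun P => hfin.mem_toFinset
  have hmain := cap_main hfin.toFinset
    (fun P hP Q hQ R hR h1 h2 h3 => li_of_not_coll P Q R
      (hcap P ((hmem P).mp hP) Q ((hmem Q).mp hQ) R ((hmem R).mp hR) h1 h2 h3))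
    (fun Q hQ => by
      obtain ⟨A, hA, A', hA', h⟩ := compl_of_max K' hcap hmax Q (fun h => hQ ((hmem Q).mpr h))
      exact ⟨A, (hmem A).mpr hA, A', (hmem A').mpr hA', h⟩)
    q hcard hq
  refine lt_of_le_of_lt ?_ hmain
  rw [← Set.ncard_eq_toFinset_card K' hfin]
  exact_mod_cast Set.ncard_le_ncard hle hfin
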